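/- arXiv:1502.00151 — 2 statements merged into one kernel-verified Lean document; each statement's English description precedes it below -/
import Mathlib

section
/- Let G and \bar{G} be connected graphs of order n ≥ 5. Then 2 ≤ rvx_3(G) + rvx_3(\bar{G}) ≤ n − 1, and both bounds are attained for suitable G. -/
/-- A vertex-coloring `c` makes `G` vertex-rainbow `k`-tree-connected using at most `m`
colors (on Steiner vertices): every `k`-subset `S` of vertices admits a connected subgraph
(equivalently, a Steiner tree) containing `S` whose vertices outside `S` receive pairwise
distinct colors, all drawn from a palette of `m` colors. -/
def hasRvxColoring {V : Type*} (G : SimpleGraph V) (k m : ℕ) : Prop :=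
  ∃ c : V → ℕ, ∀ S : Finset V, S.card = k →
    ∃ T : G.Subgraph, T.Connected ∧ ↑S ⊆ T.verts ∧
      Set.InjOn c (T.verts \ ↑S) ∧ ∀ v ∈ T.verts \ (↑S : Set V), c v < m

/-- The `k`-vertex-rainbow index `rvx_k(G)`. -/
noncomputable def rvx {V : Type*} (G : SimpleGraph V) (k : ℕ) : ℕ :=
  sInf {m | hasRvxColoring G k m}

/-- The Steiner distance of a vertex set `S`: the minimum number of edges of a connected
subgraph of `G` containing `S`. -/
noncomputable def steinerDist {V : Type*} (G : SimpleGraph V) (S : Set V) : ℕ :=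
  sInf {m | ∃ T : G.Subgraph, T.Connected ∧ S ⊆ T.verts ∧ T.edgeSet.ncard = m}

/-- The Steiner `k`-diameter of `G`. -/
noncomputable def sdiam {V : Type*} [Fintype V] [DecidableEq V]
    (G : SimpleGraph V) (k : ℕ) : ℕ :=
  (Finset.univ.powersetCard k).sup fun S : Finset V => steinerDist G (S : Set V)

/-- `t(n,k,ℓ)`: the minimal number of edges of a connected graph of order `n`
with `rvx_k(G) ≤ ℓ`. -/
noncomputable def minSize (n k l : ℕ) : ℕ :=
  sInf {m | ∃ G : SimpleGraph (Fin n), G.Connected ∧ rvx G k ≤ l ∧ G.edgeSet.ncard = m}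

namespace RvxNG

/-- `A` induces a connected subgraph of `G`. -/
def CS {V : Type*} (G : SimpleGraph V) (A : Set V) : Prop := (G.induce A).Connected

section
variable {V : Type*} {G : SimpleGraph V}

lemma CS.ins {A : Set V} (h : CS G A) {d v : V} (hd : d ∈ A) (hv : G.Adj d v) :
    CS G (insert v A) := by
  have h2 := G.induce_union_connected h.preconnected
    (SimpleGraph.induce_pair_connected_of_adj hv).preconnected ⟨d, hd, by simp⟩
  have e : insert v A = A ∪ {d, v} := by
    ext x; simp only [Set.mem_insert_iff, Set.mem_union, Set.mem_singleton_iff]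
    constructor
    · rintro (h | h) <;> simp [h]
    · rintro (h | rfl | h) <;> simp [*]
  unfold CS; rw [e]; exact h2

lemma cs_singleton (v : V) : CS G {v} := by
  unfold CS
  have : Subsingleton ({v} : Set V) := by infer_instance
  have : Nonempty ({v} : Set V) := by infer_instance
  exact ⟨SimpleGraph.Preconnected.of_subsingleton⟩

lemma cs_pair {u v : V} (h : G.Adj u v) : CS G {u, v} :=
  SimpleGraph.induce_pair_connected_of_adj h

lemma cs_univ (h : G.Connected) : CS G Set.univ := by
  unfold CS
  exact (SimpleGraph.Iso.connected_iff (SimpleGraph.induceUnivIso G)).2 h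

lemma CS.boundary {A B : Set V} (h : CS G A) (hB : B ⊆ A) {x y : V} (hx : x ∈ B) (hy : y ∈ A)
    (hyB : y ∉ B) : ∃ b ∈ B, ∃ a ∈ A, a ∉ B ∧ G.Adj b a := by
  obtain ⟨p⟩ := h.preconnected ⟨x, hB hx⟩ ⟨y, hy⟩
  obtain ⟨d, -, h1, h2⟩ := p.exists_boundary_dart {z | z.1 ∈ B} hx hyB
  exact ⟨d.fst.1, h1, d.snd.1, d.snd.2, h2, d.adj⟩

lemma CS.union_dom {D : Set V} (h : CS G D) (dom : ∀ v, v ∈ D ∨ ∃ d ∈ D, G.Adj d v)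
    (S : Finset V) : CS G (D ∪ ↑S) := by
  classical
  induction S using Finset.induction_on with
  | empty => simpa using h
  | insert a S _ ih =>
    have e : D ∪ ↑(insert a S) = insert a (D ∪ (↑S : Set V)) := by
      ext; simp
    rw [e]
    rcases dom a with ha | ⟨d, hd, hda⟩
    · rw [Set.insert_eq_of_mem (Set.mem_union_left _ ha)]; exact ih
    · exact ih.ins (Or.inl hd) hda

lemma CS.grow {A : Finset V} (h : CS G (A : Set V)) {p : V} (hp : p ∈ A) (k : ℕ)
    (hk : k + 1 ≤ A.card) : ∃ B : Finset V, B ⊆ A ∧ p ∈ B ∧ B.card = k + 1 ∧ CS G (B : Set V) := by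
  classical
  induction k with
  | zero => exact ⟨{p}, by simpa using hp, by simp, by simp, by simpa using cs_singleton p⟩
  | succ k ih =>
    obtain ⟨B, hB, hpB, hc, hcs⟩ := ih (by omega)
    obtain ⟨y, hy, hyB⟩ : ∃ y ∈ A, y ∉ B := by
      by_contra! hh
      have := Finset.card_le_card (show A ⊆ B from hh)
      omega
    obtain ⟨b, hb, a, ha, haB, hab⟩ := h.boundary (B := (B : Set V)) (by exact_mod_cast hB)
      (by exact_mod_cast hpB) (by exact_mod_cast hy) (by exact_mod_cast hyB)
    refine ⟨insert a B, ?_, by simp [hpB], ?_, ?_⟩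
    · intro z hz
      rcases Finset.mem_insert.1 hz with rfl | hz
      · exact_mod_cast ha
      · exact hB hz
    · rw [Finset.card_insert_of_notMem (by exact_mod_cast haB), hc]
    · rw [Finset.coe_insert]; exact hcs.ins hb hab

lemma hasRvx_of_cds (D : Finset V) (h : CS G (D : Set V))
    (dom : ∀ v, v ∈ D ∨ ∃ d ∈ D, G.Adj d v) : hasRvxColoring G 3 D.card := by
  classical
  let e := D.equivFin
  refine ⟨fun v => if hv : v ∈ D then (e ⟨v, hv⟩ : ℕ) else 0, fun S _ => ?_⟩
  refine ⟨(⊤ : G.Subgraph).induce ((D : Set V) ∪ ↑S), ?_, ?_, ?_, ?_⟩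
  · exact SimpleGraph.connected_induce_iff.1
      (h.union_dom (by simpa using dom) S)
  · simp
  · rintro a ⟨ha, haS⟩ b ⟨hb, hbS⟩ hab
    have ha : a ∈ D := by simpa using Or.resolve_right ha haS
    have hb : b ∈ D := by simpa using Or.resolve_right hb hbS
    simp only [ha, hb, dif_pos] at hab
    have := e.injective (Fin.ext hab)
    simpa using this
  · rintro a ⟨ha, haS⟩
    have ha : a ∈ D := by simpa using Or.resolve_right ha haS
    simp only [ha, dif_pos]
    exact (e ⟨a, ha⟩).2

lemma rvx_le_of_cds (D : Finset V) (h : CS G (D : Set V))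
    (dom : ∀ v, v ∈ D ∨ ∃ d ∈ D, G.Adj d v) : rvx G 3 ≤ D.card :=
  Nat.sInf_le (hasRvx_of_cds D h dom)

lemma rvx_spec [Fintype V] (h : G.Connected) : hasRvxColoring G 3 (rvx G 3) := by
  apply Nat.sInf_mem (s := {m | hasRvxColoring G 3 m})
  exact ⟨_, hasRvx_of_cds Finset.univ (by simpa using cs_univ h) (by simp)⟩

lemma rvx_le_card_sub_two [Fintype V] (h : G.Connected) (hn : 3 ≤ Fintype.card V) :
    rvx G 3 ≤ Fintype.card V - 2 := by
  classical
  have hU : CS G ((Finset.univ : Finset V) : Set V) := by simpa using cs_univ h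
  obtain ⟨q⟩ := h.nonempty
  obtain ⟨B, -, hqB, hBc, hB⟩ := hU.grow (Finset.mem_univ q) (Fintype.card V - 2) (by
    rw [Finset.card_univ]; omega)
  obtain ⟨u, hu⟩ : ∃ u, u ∉ B := by
    by_contra! hh
    have := Finset.card_le_card (show Finset.univ ⊆ B from fun x _ => hh x)
    rw [Finset.card_univ] at this; omega
  have hBu : ∀ x, x ≠ u → x ∈ B := by
    intro x hx
    by_contra hxB
    have : (insert x (insert u B)).card ≤ Fintype.card V := Finset.card_le_univ _
    rw [Finset.card_insert_of_notMem (by simp [hx, hxB]), Finset.card_insert_of_notMem hu] at this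
    omega
  obtain ⟨p, hp, u', -, hu', hpu⟩ := hU.boundary (B := (B : Set V)) (by simp)
    (by exact_mod_cast hqB) (Finset.mem_coe.2 (Finset.mem_univ u)) (by exact_mod_cast hu)
  have : u' = u := by
    by_contra hne; exact hu' (by exact_mod_cast hBu u' hne)
  subst this
  have hp' : p ∈ B := by exact_mod_cast hp
  obtain ⟨D, hDB, hpD, hDc, hD⟩ := hB.grow hp' (Fintype.card V - 3) (by omega)
  have : D.card = Fintype.card V - 2 := by omega
  rw [← this]
  refine rvx_le_of_cds D hD fun v => ?_
  by_cases hvD : v ∈ D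
  · exact Or.inl hvD
  right
  by_cases hvu : v = u'
  · subst hvu; exact ⟨p, hpD, hpu⟩
  obtain ⟨b, hb, a, ha, haD, hab⟩ := hB.boundary (B := (D : Set V)) (by exact_mod_cast hDB)
    (by exact_mod_cast hpD) (by exact_mod_cast hBu v hvu) (by exact_mod_cast hvD)
  have : a = v := by
    by_contra hne
    have : (insert a (insert v D)).card ≤ B.card := by
      apply Finset.card_le_card
      intro z hz
      simp only [Finset.mem_insert] at hz
      rcases hz with rfl | rfl | hz
      · exact_mod_cast ha
      · exact hBu _ hvu
      · exact hDB hz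
    rw [Finset.card_insert_of_notMem (by simp only [Finset.mem_insert, not_or]; exact ⟨hne, by exact_mod_cast haD⟩),
      Finset.card_insert_of_notMem hvD] at this
    omega
  subst this
  exact ⟨b, by exact_mod_cast hb, hab⟩

lemma hasRvx_one (h : ∀ S : Finset V, S.card = 3 → ∃ w, CS G (insert w (S : Set V))) :
    rvx G 3 ≤ 1 := by
  refine Nat.sInf_le ⟨fun _ => 0, fun S hS => ?_⟩
  obtain ⟨w, hw⟩ := h S hS
  refine ⟨(⊤ : G.Subgraph).induce (insert w (S : Set V)),
    SimpleGraph.connected_induce_iff.1 hw, by simp, ?_, by simp⟩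
  rintro a ⟨ha, haS⟩ b ⟨hb, hbS⟩ -
  have h1 : a = w := Or.resolve_right ha haS
  have h2 : b = w := Or.resolve_right hb hbS
  rw [h1, h2]

lemma connected_of_triples [Fintype V] (hn : 3 ≤ Fintype.card V)
    (h : ∀ S : Finset V, S.card = 3 → ∃ w, CS G (insert w (S : Set V))) : G.Connected := by
  classical
  have : Nonempty V := Fintype.card_pos_iff.1 (by omega)
  refine ⟨fun x y => ?_⟩
  obtain ⟨S, hS, -, hSc⟩ := Finset.exists_subsuperset_card_eq (Finset.subset_univ ({x, y} : Finset V))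
    (show _ ≤ 3 from (Finset.card_le_two).trans (by norm_num)) (by simpa [Finset.card_univ] using hn)
  obtain ⟨w, hw⟩ := h S hSc
  have hx : x ∈ insert w (S : Set V) := Or.inr (by exact_mod_cast hS (by simp))
  have hy : y ∈ insert w (S : Set V) := Or.inr (by exact_mod_cast hS (by simp))
  exact (hw.preconnected ⟨x, hx⟩ ⟨y, hy⟩).map (SimpleGraph.Embedding.induce _).toHom

lemma one_le_rvx [Fintype V] (hn : 3 ≤ Fintype.card V) (h : G.Connected) (hc : Gᶜ.Connected) :
    1 ≤ rvx G 3 := by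
  classical
  by_contra hlt
  have h0 : rvx G 3 = 0 := by omega
  obtain ⟨c, hcol⟩ := h0 ▸ rvx_spec h
  have hU : CS Gᶜ ((Finset.univ : Finset V) : Set V) := by simpa using cs_univ hc
  obtain ⟨q⟩ := h.nonempty
  obtain ⟨B, -, hqB, hBc, hB⟩ := hU.grow (Finset.mem_univ q) 2 (by
    rw [Finset.card_univ]; omega)
  -- `B` is a triple connected in the complement
  obtain ⟨T, hT, hBT, -, hT2⟩ := hcol B hBc
  have hTB : T.verts = (B : Set V) := by
    refine Set.Subset.antisymm (fun x hx => ?_) hBT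
    by_contra hxB
    exact absurd (hT2 x ⟨hx, hxB⟩) (by simp)
  have hGB : CS G (B : Set V) := by
    have := hT.induce_verts
    rwa [hTB] at this
  obtain ⟨x, y, z, hxy, hxz, hyz, rfl⟩ := Finset.card_eq_three.1 hBc
  have key : ∀ (H : SimpleGraph V), CS H (({x, y, z} : Finset V) : Set V) →
      ∀ a ∈ ({x, y, z} : Finset V), ∃ b ∈ ({x, y, z} : Finset V), b ≠ a ∧ H.Adj a b := by
    intro H hH a ha
    obtain ⟨b, hb, hba⟩ : ∃ b ∈ ({x, y, z} : Finset V), b ≠ a := by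
      simp only [Finset.mem_insert, Finset.mem_singleton] at ha ⊢
      by_cases h1 : a = x
      · exact ⟨y, by simp, by rw [h1]; exact hxy.symm⟩
      · exact ⟨x, by simp, Ne.symm h1⟩
    obtain ⟨a', ha', b', hb', hn', hadj⟩ := hH.boundary (B := {a}) (by
      intro t ht; rw [Set.mem_singleton_iff.1 ht]; exact_mod_cast ha) rfl
      (show b ∈ _ by exact_mod_cast hb) (by simpa using hba)
    obtain rfl : a' = a := ha'
    exact ⟨b', by exact_mod_cast hb', by simpa using hn', hadj⟩
  have k1 := key G hGB
  have k2 := key Gᶜ hB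
  simp only [Finset.mem_insert, Finset.mem_singleton, forall_eq_or_imp, forall_eq,
    exists_eq_or_imp, exists_eq_left, SimpleGraph.compl_adj] at k1 k2
  have s1 := G.adj_comm x y
  have s2 := G.adj_comm x z
  have s3 := G.adj_comm y z
  grind

lemma bad_struct (h : 2 ≤ rvx Gᶜ 3) : ∃ x y z, y ≠ z ∧ G.Adj x y ∧ G.Adj x z ∧
    (∀ w, w ≠ x → w ≠ y → w ≠ z → G.Adj x w ∨ G.Adj y w ∨ G.Adj z w) ∧
    (¬ G.Adj y z → ∀ w, w ≠ x → w ≠ y → w ≠ z → G.Adj x w ∨ G.Adj y w) := by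
  classical
  obtain ⟨S, hS, hbad⟩ : ∃ S : Finset V, S.card = 3 ∧ ∀ w, ¬ CS Gᶜ (insert w (S : Set V)) := by
    by_contra! hh
    have := hasRvx_one hh
    omega
  -- find the centre
  obtain ⟨x, y, z, hxy, hxz, hyz, rfl, h1, h2⟩ : ∃ x y z, x ≠ y ∧ x ≠ z ∧ y ≠ z ∧ S = {x, y, z} ∧
      G.Adj x y ∧ G.Adj x z := by
    obtain ⟨a, b, c, hab, hac, hbc, rfl⟩ := Finset.card_eq_three.1 hS
    have path : ∀ x y z, x ≠ y → x ≠ z → ({a, b, c} : Finset V) = {x, y, z} →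
        G.Adj x y ∨ G.Adj x z := by
      intro x y z hxy hxz he
      by_contra! hh
      apply hbad x
      rw [he]
      have : insert x ((({x, y, z} : Finset V)) : Set V) = insert z {x, y} := by
        ext; simp; tauto
      rw [this]
      exact (cs_pair (G := Gᶜ) (by simp [hxy, hh.1])).ins (d := x) (by simp) (by simp [hxz, hh.2])
    have e2 : ({a, b, c} : Finset V) = {b, a, c} := by ext; simp; tauto
    have e3 : ({a, b, c} : Finset V) = {c, a, b} := by ext; simp; tauto
    have p1 := path a b c hab hac rfl
    have p2 := path b a c hab.symm hbc e2
    have p3 := path c a b hac.symm hbc.symm e3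
    have s1 := G.adj_comm a b
    have s2 := G.adj_comm a c
    have s3 := G.adj_comm b c
    by_cases q1 : G.Adj a b
    · by_cases q2 : G.Adj a c
      · exact ⟨a, b, c, hab, hac, hbc, rfl, q1, q2⟩
      · exact ⟨b, a, c, hab.symm, hbc, hac, e2, q1.symm, by tauto⟩
    · exact ⟨c, a, b, hac.symm, hbc.symm, hab, e3, by tauto, by tauto⟩
  refine ⟨x, y, z, hyz, h1, h2, ?_, ?_⟩
  · intro w hx hy hz
    by_contra! hh
    apply hbad w
    have : insert w ((({x, y, z} : Finset V)) : Set V) = insert z (insert y {w, x}) := by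
      ext; simp; tauto
    rw [this]
    refine CS.ins (d := w) (CS.ins (d := w) (cs_pair ?_) (by simp) ?_) (by simp) ?_ <;>
      simp only [SimpleGraph.compl_adj, G.adj_comm w] <;> tauto
  · intro hnyz w hx hy hz
    by_contra! hh
    apply hbad w
    have : insert w ((({x, y, z} : Finset V)) : Set V) = insert z (insert y {w, x}) := by
      ext; simp; tauto
    rw [this]
    refine CS.ins (d := y) (CS.ins (d := w) (cs_pair ?_) (by simp) ?_) (by simp) ?_ <;>
      simp only [SimpleGraph.compl_adj, G.adj_comm w] <;> tauto

lemma rvx_le_two_of_dom {x y : V} (h : G.Adj x y)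
    (dom : ∀ w, w ≠ x → w ≠ y → G.Adj x w ∨ G.Adj y w) : rvx G 3 ≤ 2 := by
  classical
  refine (rvx_le_of_cds {x, y} (by simpa using cs_pair h) fun v => ?_).trans Finset.card_le_two
  have := dom v
  simp
  tauto

lemma rvx_le_three (h : 2 ≤ rvx Gᶜ 3) : rvx G 3 ≤ 3 := by
  classical
  obtain ⟨x, y, z, hyz, h1, h2, dom, -⟩ := bad_struct h
  refine (rvx_le_of_cds {z, x, y} ?_ fun v => ?_).trans Finset.card_le_three
  · simpa using (cs_pair h1).ins (d := x) (by simp) h2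
  · have := dom v
    simp
    tauto

lemma six_struct (h : 2 ≤ rvx Gᶜ 3) (h3 : 3 ≤ rvx G 3) :
    ∃ x y z a b c, G.Adj x y ∧ G.Adj x z ∧ G.Adj y z ∧
      G.Adj x a ∧ ¬ G.Adj y a ∧ ¬ G.Adj z a ∧
      ¬ G.Adj x b ∧ G.Adj y b ∧ ¬ G.Adj z b ∧
      ¬ G.Adj x c ∧ ¬ G.Adj y c ∧ G.Adj z c := by
  obtain ⟨x, y, z, hyz, h1, h2, dom, dom2⟩ := bad_struct h
  have nd : ∀ p q, G.Adj p q → ∃ w, w ≠ p ∧ w ≠ q ∧ ¬ G.Adj p w ∧ ¬ G.Adj q w := by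
    intro p q hpq
    by_contra! hh
    have := rvx_le_two_of_dom hpq (fun w hp hq => by have := hh w hp hq; tauto)
    omega
  obtain ⟨c, c1, c2, c3, c4⟩ := nd x y h1
  have hzc : c ≠ z := by rintro rfl; exact c3 h2
  have hadj : G.Adj y z := by
    by_contra hn
    have := dom2 hn c c1 c2 hzc
    tauto
  obtain ⟨b, b1, b2, b3, b4⟩ := nd x z h2
  have hyb : b ≠ y := by rintro rfl; exact b3 h1
  obtain ⟨a, a1, a2, a3, a4⟩ := nd y z hadj
  have hxa : a ≠ x := by rintro rfl; exact a3 h1.symm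
  have := dom a hxa a1 a2
  have := dom b b1 hyb b2
  have := dom c c1 c2 hzc
  exact ⟨x, y, z, a, b, c, h1, h2, hadj, by tauto, a3, a4, b3, by tauto, b4, c3, c4, by tauto⟩

lemma six_card [Fintype V] (x y z a b c : V)
    (h : G.Adj x y ∧ G.Adj x z ∧ G.Adj y z ∧
      G.Adj x a ∧ ¬ G.Adj y a ∧ ¬ G.Adj z a ∧
      ¬ G.Adj x b ∧ G.Adj y b ∧ ¬ G.Adj z b ∧
      ¬ G.Adj x c ∧ ¬ G.Adj y c ∧ G.Adj z c) :
    ∃ F : Finset V, (∀ v, v ∈ F ↔ v = x ∨ v = y ∨ v = z ∨ v = a ∨ v = b ∨ v = c) ∧ F.card = 6 := by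
  classical
  refine ⟨{x, y, z, a, b, c}, by simp, ?_⟩
  obtain ⟨h1, h2, h3, h4, h5, h6, h7, h8, h9, h10, h11, h12⟩ := h
  have n1 := h1.ne
  have n2 := h2.ne
  have n3 := h3.ne
  have i1 := h1.symm
  have i2 := h2.symm
  have i3 := h3.symm
  have : x ≠ a := h4.ne
  have : y ≠ a := by rintro rfl; tauto
  have : z ≠ a := by rintro rfl; tauto
  have : x ≠ b := by rintro rfl; tauto
  have : y ≠ b := h8.ne
  have : z ≠ b := by rintro rfl; tauto
  have : x ≠ c := by rintro rfl; tauto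
  have : y ≠ c := by rintro rfl; tauto
  have : z ≠ c := h12.ne
  have : a ≠ b := by rintro rfl; tauto
  have : a ≠ c := by rintro rfl; tauto
  have : b ≠ c := by rintro rfl; tauto
  simp [*]

lemma upper [Fintype V] (hn : 5 ≤ Fintype.card V) (h : G.Connected) (hc : Gᶜ.Connected) :
    rvx G 3 + rvx Gᶜ 3 ≤ Fintype.card V - 1 := by
  have u1 := rvx_le_card_sub_two h (by omega)
  have u2 := rvx_le_card_sub_two hc (by omega)
  by_cases g1 : 2 ≤ rvx Gᶜ 3
  swap
  · omega
  by_cases g2 : 2 ≤ rvx G 3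
  swap
  · omega
  have t1 := rvx_le_three g1
  have t2 : rvx Gᶜ 3 ≤ 3 := rvx_le_three (by rwa [compl_compl])
  have c6 : ∀ H : SimpleGraph V, 2 ≤ rvx Hᶜ 3 → 3 ≤ rvx H 3 → 6 ≤ Fintype.card V := by
    intro H q1 q2
    obtain ⟨x, y, z, a, b, c, hh⟩ := six_struct q1 q2
    obtain ⟨F, -, hF⟩ := six_card x y z a b c hh
    exact hF ▸ Finset.card_le_univ F
  have d1 := c6 G g1
  have d2 := c6 Gᶜ (by rwa [compl_compl])
  by_contra hlt
  have e6 : Fintype.card V = 6 := by omega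
  obtain ⟨x, y, z, a, b, c, hh⟩ := six_struct g1 (by omega)
  obtain ⟨F, hF, hFc⟩ := six_card x y z a b c hh
  have hall : ∀ v, v = x ∨ v = y ∨ v = z ∨ v = a ∨ v = b ∨ v = c := by
    intro v
    rw [← hF]
    have := Finset.eq_univ_of_card F (by omega)
    simp [this]
  obtain ⟨x', y', z', a', b', c', hh'⟩ := six_struct (G := Gᶜ) (by rwa [compl_compl]) (by omega)
  obtain ⟨F', hF', hFc'⟩ := six_card x' y' z' a' b' c' hh'
  have hall' : ∀ v, v = x' ∨ v = y' ∨ v = z' ∨ v = a' ∨ v = b' ∨ v = c' := by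
    intro v
    rw [← hF']
    have := Finset.eq_univ_of_card F' (by omega)
    simp [this]
  clear hF hFc e6 d1 d2 c6 t1 t2 g1 g2 u1 u2 h hc hlt hn hF' hFc'
  obtain ⟨h1, h2, h3, h4, h5, h6, h7, h8, h9, h10, h11, h12⟩ := hh
  have i1 := h1.symm
  have i2 := h2.symm
  have i3 := h3.symm
  have key : ∀ v p q, (∀ u, G.Adj v u → u = p ∨ u = q) → v = a ∨ v = b ∨ v = c := by
    intro v p q hv
    have n1 := h1.ne
    have n2 := h2.ne
    have n3 := h3.ne
    rcases hall v with rfl | rfl | rfl | r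
    · have := hv _ h1
      have := hv _ h2
      have := hv _ h4
      grind
    · have := hv _ i1
      have := hv _ h3
      have := hv _ h8
      grind
    · have := hv _ i2
      have := hv _ i3
      have := hv _ h12
      grind
    · exact r
  simp only [SimpleGraph.compl_adj, not_and, not_not] at hh'
  obtain ⟨⟨p1, q1⟩, ⟨p2, q2⟩, ⟨p3, q3⟩, ⟨p4, q4⟩, q5, q6, q7, ⟨p8, q8⟩, q9, q10, q11, ⟨p12, q12⟩⟩ := hh'
  have kx : x' = a ∨ x' = b ∨ x' = c := by
    refine key x' b' c' fun u hu => ?_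
    rcases hall' u with rfl | rfl | rfl | rfl | r | r
    · exact (hu.ne rfl).elim
    · exact (q1 hu).elim
    · exact (q2 hu).elim
    · exact (q4 hu).elim
    · exact Or.inl r
    · exact Or.inr r
  have ky : y' = a ∨ y' = b ∨ y' = c := by
    refine key y' a' c' fun u hu => ?_
    rcases hall' u with rfl | rfl | rfl | r | rfl | r
    · exact (q1 hu.symm).elim
    · exact (hu.ne rfl).elim
    · exact (q3 hu).elim
    · exact Or.inl r
    · exact (q8 hu).elim
    · exact Or.inr r
  have kz : z' = a ∨ z' = b ∨ z' = c := by
    refine key z' a' b' fun u hu => ?_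
    rcases hall' u with rfl | rfl | rfl | r | r | rfl
    · exact (q2 hu.symm).elim
    · exact (q3 hu.symm).elim
    · exact (hu.ne rfl).elim
    · exact Or.inl r
    · exact Or.inr r
    · exact (q12 hu).elim
  have ny : y' ≠ a' := by rintro rfl; exact q3 (q6 (Ne.symm p3)).symm
  have nz : z' ≠ a' := by rintro rfl; exact q3 (q5 p3)
  have q5' := (q5 ny).symm
  have q6' := (q6 nz).symm
  have ha' : a' = x ∨ a' = y ∨ a' = z := by
    have := hall a'
    clear hall hall' key
    grind only
  have r5 := q5 ny
  have r6 := q6 nz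
  clear hall hall' key kx q5 q6 q7 q9 q10 q11
  rcases ky with rfl | rfl | rfl <;> rcases kz with rfl | rfl | rfl <;>
    rcases ha' with rfl | rfl | rfl <;> first | exact p3 rfl | exact absurd q5' (by assumption) |
      exact absurd q6' (by assumption)
end
end RvxNG
namespace RvxNG
/-- Adjacency in the 5-cycle. -/
def C5 (a b : Fin 5) : Bool := (a + 1 == b) || (b + 1 == a)

lemma C5_symm (a b : Fin 5) : C5 a b = C5 b a := by revert a b; decide
lemma C5_irrefl (a : Fin 5) : C5 a a = false := by revert a; decide

lemma C5_good (a b c : Fin 5) :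
    (C5 a b = true ∧ C5 a c = true) ∨ (C5 b a = true ∧ C5 b c = true) ∨
    (C5 c a = true ∧ C5 c b = true) ∨
    ∃ w, C5 w a = true ∧ (C5 w b = true ∨ C5 a b = true) ∧ (C5 w c = true ∨ C5 a c = true) ∨
      C5 w b = true ∧ (C5 w a = true ∨ C5 b a = true) ∧ (C5 w c = true ∨ C5 b c = true) := by
  revert a b c; decide

lemma C5_good' (a b c : Fin 5) :
    (C5 a b = false ∧ C5 a c = false) ∨ (C5 b a = false ∧ C5 b c = false) ∨
    (C5 c a = false ∧ C5 c b = false) ∨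
    ∃ w, w ≠ a ∧ w ≠ b ∧ w ≠ c ∧ (C5 w a = false ∧ (C5 w b = false ∨ C5 a b = false) ∧
        (C5 w c = false ∨ C5 a c = false) ∨
      C5 w b = false ∧ (C5 w a = false ∨ C5 b a = false) ∧ (C5 w c = false ∨ C5 b c = false)) := by
  revert a b c; decide

section
variable {V : Type*} {G : SimpleGraph V}

lemma cs_center {x y z : V} (h1 : G.Adj x y) (h2 : G.Adj x z) (S : Finset V)
    (hS : ∀ v, v ∈ S ↔ v = x ∨ v = y ∨ v = z) : ∃ w, CS G (insert w (S : Set V)) := by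
  refine ⟨x, ?_⟩
  have : insert x (S : Set V) = insert z {x, y} := by
    ext v; simp [hS]; tauto
  rw [this]
  exact (cs_pair h1).ins (d := x) (by simp) h2

lemma cs_edge {w x y z : V} (h0 : G.Adj w x) (h1 : G.Adj w y ∨ G.Adj x y)
    (h2 : G.Adj w z ∨ G.Adj x z) (S : Finset V)
    (hS : ∀ v, v ∈ S ↔ v = x ∨ v = y ∨ v = z) : ∃ w, CS G (insert w (S : Set V)) := by
  refine ⟨w, ?_⟩
  have : insert w (S : Set V) = insert z (insert y {w, x}) := by
    ext v; simp [hS]; tauto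
  rw [this]
  have k1 : CS G (insert y {w, x}) := by
    rcases h1 with h | h
    · exact (cs_pair h0).ins (d := w) (by simp) h
    · exact (cs_pair h0).ins (d := x) (by simp) h
  rcases h2 with h | h
  · exact k1.ins (d := w) (by simp) h
  · exact k1.ins (d := x) (by simp) h

lemma triples_of (h : ∀ x y z : V, x ≠ y → x ≠ z → y ≠ z →
    (G.Adj x y ∧ G.Adj x z) ∨ (G.Adj y x ∧ G.Adj y z) ∨ (G.Adj z x ∧ G.Adj z y) ∨
    ∃ w, G.Adj w x ∧ (G.Adj w y ∨ G.Adj x y) ∧ (G.Adj w z ∨ G.Adj x z) ∨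
      G.Adj w y ∧ (G.Adj w x ∨ G.Adj y x) ∧ (G.Adj w z ∨ G.Adj y z))
    (S : Finset V) (hS : S.card = 3) : ∃ w, CS G (insert w (S : Set V)) := by
  classical
  obtain ⟨x, y, z, hxy, hxz, hyz, rfl⟩ := Finset.card_eq_three.1 hS
  rcases h x y z hxy hxz hyz with ⟨a, b⟩ | ⟨a, b⟩ | ⟨a, b⟩ | ⟨w, ⟨a, b, c⟩ | ⟨a, b, c⟩⟩
  · exact cs_center a b _ (by simp)
  · exact cs_center a b _ (by intro v; simp; tauto)
  · exact cs_center a b _ (by intro v; simp; tauto)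
  · exact cs_edge a b c _ (by simp)
  · exact cs_edge a b c _ (by intro v; simp; tauto)
end

lemma exists_two (n : ℕ) (hn : 5 ≤ n) :
    ∃ G : SimpleGraph (Fin n), G.Connected ∧ Gᶜ.Connected ∧ rvx G 3 + rvx Gᶜ 3 = 2 := by
  obtain ⟨f, hf⟩ : ∃ f : Fin n → Fin 5, Function.Surjective f :=
    ⟨fun i => ⟨min i.1 4, by omega⟩, fun j => ⟨⟨j.1, by omega⟩, by ext; simp; omega⟩⟩
  let G : SimpleGraph (Fin n) :=
    { Adj := fun x y => C5 (f x) (f y) = true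
      symm := ⟨fun x y h => by rw [C5_symm]; exact h⟩
      loopless := ⟨fun x h => by simp [C5_irrefl] at h⟩ }
  have hA : ∀ x y, G.Adj x y ↔ C5 (f x) (f y) = true := fun _ _ => Iff.rfl
  have t1 := triples_of (G := G) (by
    intro x y z _ _ _
    simp only [hA]
    rw [← hf.exists (p := fun w => C5 w (f x) = true ∧ (C5 w (f y) = true ∨ C5 (f x) (f y) = true) ∧
        (C5 w (f z) = true ∨ C5 (f x) (f z) = true) ∨ C5 w (f y) = true ∧
        (C5 w (f x) = true ∨ C5 (f y) (f x) = true) ∧ (C5 w (f z) = true ∨ C5 (f y) (f z) = true))]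
    exact C5_good (f x) (f y) (f z))
  have t2 := triples_of (G := Gᶜ) (by
    intro x y z h1 h2 h3
    simp only [SimpleGraph.compl_adj, hA, Bool.not_eq_true]
    rcases C5_good' (f x) (f y) (f z) with h | h | h | ⟨w, n1, n2, n3, h⟩
    · exact Or.inl ⟨⟨h1, h.1⟩, h2, h.2⟩
    · exact Or.inr (Or.inl ⟨⟨h1.symm, h.1⟩, h3, h.2⟩)
    · exact Or.inr (Or.inr (Or.inl ⟨⟨h2.symm, h.1⟩, h3.symm, h.2⟩))
    · obtain ⟨w, rfl⟩ := hf w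
      refine Or.inr (Or.inr (Or.inr ⟨w, ?_⟩))
      have m1 : w ≠ x := fun h => n1 (h ▸ rfl)
      have m2 : w ≠ y := fun h => n2 (h ▸ rfl)
      have m3 : w ≠ z := fun h => n3 (h ▸ rfl)
      simpa [m1, m2, m3, h1, h2, h3, h1.symm] using h)
  have c1 := connected_of_triples (by simp; omega) t1
  have c2 := connected_of_triples (by simp; omega) t2
  have r1 := hasRvx_one t1
  have r2 := hasRvx_one t2
  have l1 := one_le_rvx (by simp; omega) c1 c2
  have l2 := one_le_rvx (by simp; omega) c2 (by rwa [compl_compl])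
  exact ⟨G, c1, c2, by omega⟩

lemma exists_max (n : ℕ) (hn : 5 ≤ n) :
    ∃ G : SimpleGraph (Fin n), G.Connected ∧ Gᶜ.Connected ∧ rvx G 3 + rvx Gᶜ 3 = n - 1 := by
  classical
  obtain ⟨k, rfl⟩ : ∃ k, n = k + 1 := ⟨n - 1, by omega⟩
  have c1 := SimpleGraph.pathGraph_connected k
  let G := SimpleGraph.pathGraph (k + 1)
  have c2 : Gᶜ.Connected := by
    have hadj : ∀ v : Fin (k + 1), 2 ≤ v.1 → Gᶜ.Adj 0 v := by
      intro v hv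
      simp only [G, SimpleGraph.compl_adj, SimpleGraph.pathGraph_adj, ne_eq, Fin.ext_iff, Fin.val_zero]
      omega
    refine (SimpleGraph.connected_iff_exists_forall_reachable _).2 ⟨0, fun v => ?_⟩
    rcases Nat.lt_or_ge v.1 2 with h | h
    · rcases Nat.eq_zero_or_pos v.1 with h0 | h0
      · have : v = 0 := by ext; simpa using h0
        rw [this]
      · have h3 : Gᶜ.Adj ⟨3, by omega⟩ v := by
          simp only [G, SimpleGraph.compl_adj, SimpleGraph.pathGraph_adj, ne_eq, Fin.ext_iff]
          omega
        exact (hadj ⟨3, by omega⟩ (by simp)).reachable.trans h3.reachable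
    · exact (hadj v h).reachable
  refine ⟨G, c1, c2, ?_⟩
  have u := upper (G := G) (by simpa using hn) c1 c2
  have l2 := one_le_rvx (G := Gᶜ) (by simp; omega) c2 (by rwa [compl_compl])
  suffices k - 1 ≤ rvx G 3 by
    rw [Fintype.card_fin] at u; omega
  obtain ⟨c, hc⟩ := rvx_spec c1
  -- any connected subgraph containing both ends is spanning
  have span : ∀ T : G.Subgraph, T.Connected → (0 : Fin (k + 1)) ∈ T.verts → Fin.last k ∈ T.verts →
      ∀ v, v ∈ T.verts := by
    intro T hT h0 h1 v
    by_contra hv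
    have hcs : CS G T.verts := hT.induce_verts
    obtain ⟨b, ⟨hbT, hb⟩, a, ha, haB, hab⟩ := hcs.boundary (B := {t | t ∈ T.verts ∧ t < v})
      (fun t ht => ht.1) (x := 0) (y := Fin.last k) ⟨h0, by
        have : v ≠ 0 := by rintro rfl; exact hv h0
        exact Fin.pos_iff_ne_zero.2 this⟩ h1 (fun h => absurd h.2 (not_lt.2 (Fin.le_last v)))
    have hav : a ≠ v := by rintro rfl; exact hv ha
    have hva : ¬ a < v := fun h => haB ⟨ha, h⟩
    simp only [G, SimpleGraph.pathGraph_adj] at hab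
    simp only [ne_eq, Fin.ext_iff, Fin.lt_def] at hav hva hb
    omega
  let I : Finset (Fin (k + 1)) := Finset.univ \ {0, Fin.last k}
  have h0l : (0 : Fin (k + 1)) ≠ Fin.last k := by
    simp only [ne_eq, Fin.ext_iff, Fin.val_zero, Fin.val_last]; omega
  have hI : I.card = k - 1 := by
    rw [Finset.card_sdiff_of_subset (by simp), Finset.card_pair h0l]; simp
  have hmem : ∀ v, v ∈ I ↔ v ≠ 0 ∧ v ≠ Fin.last k := by intro v; simp [I]
  have third : ∀ u ∈ I, ∀ v ∈ I, ∃ x ∈ I, x ≠ u ∧ x ≠ v := by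
    intro u hu v hv
    by_contra! hh
    have : I ⊆ {u, v} := by
      intro x hx
      have := hh x hx
      simp only [Finset.mem_insert, Finset.mem_singleton]; tauto
    have := (Finset.card_le_card this).trans Finset.card_le_two
    omega
  have main : ∀ u ∈ I, ∀ v ∈ I, (c u = c v → u = v) ∧ c u < rvx G 3 := by
    intro u hu v hv
    obtain ⟨x, hx, hxu, hxv⟩ := third u hu v hv
    rw [hmem] at hu hv hx
    obtain ⟨T, hT, hS, hinj, hlt⟩ := hc {0, Fin.last k, x} (by
      rw [Finset.card_eq_three]
      exact ⟨0, Fin.last k, x, h0l, hx.1.symm, hx.2.symm, rfl⟩)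
    have sp := span T hT (hS (by simp)) (hS (by simp))
    have hu' : u ∈ T.verts \ ((({0, Fin.last k, x} : Finset (Fin (k + 1)))) : Set (Fin (k + 1))) :=
      ⟨sp u, by simp [hu.1, hu.2, hxu.symm]⟩
    have hv' : v ∈ T.verts \ ((({0, Fin.last k, x} : Finset (Fin (k + 1)))) : Set (Fin (k + 1))) :=
      ⟨sp v, by simp [hv.1, hv.2, hxv.symm]⟩
    exact ⟨fun h => hinj hu' hv' h, hlt u hu'⟩
  rw [← hI, ← Finset.card_range (rvx G 3)]
  exact Finset.card_le_card_of_injOn c (fun u hu => by simpa using (main u hu u hu).2)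
    (fun u hu v hv h => (main u hu v hv).1 h)

end RvxNG

/-- for connected complementary graphs of order `n ≥ 5`,
`2 ≤ rvx_3(G) + rvx_3(Ḡ) ≤ n - 1`, and both bounds are sharp. -/
theorem rvx_three_nordhaus_gaddum (n : ℕ) (hn : 5 ≤ n) :
    (∀ (V : Type) [Fintype V] (G : SimpleGraph V), Fintype.card V = n →
      G.Connected → Gᶜ.Connected →
        2 ≤ rvx G 3 + rvx Gᶜ 3 ∧ rvx G 3 + rvx Gᶜ 3 ≤ n - 1) ∧
    (∃ G : SimpleGraph (Fin n), G.Connected ∧ Gᶜ.Connected ∧ rvx G 3 + rvx Gᶜ 3 = 2) ∧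
    (∃ G : SimpleGraph (Fin n), G.Connected ∧ Gᶜ.Connected ∧
      rvx G 3 + rvx Gᶜ 3 = n - 1) := by
  refine ⟨?_, RvxNG.exists_two n hn, RvxNG.exists_max n hn⟩
  intro V _ G hV h hc
  have l1 := RvxNG.one_le_rvx (by omega) h hc
  have l2 := RvxNG.one_le_rvx (G := Gᶜ) (by omega) hc (by rwa [compl_compl])
  have u := RvxNG.upper (by omega) h hc
  rw [hV] at u
  exact ⟨by omega, u⟩
end

section
/- Let G be a nontrivial connected graph of order n with rvx_3(G) = ℓ, and let G' be obtained from G by adding a new vertex v adjacent to q vertices of G. If q ≥ n − ℓ, then rvx_3(G') ≤ ℓ. -/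
namespace RvxAux
open Relation

variable {V : Type*}

def rG (G : SimpleGraph V) (U : Set V) : SimpleGraph V where
  Adj a b := G.Adj a b ∧ a ∈ U ∧ b ∈ U
  symm := ⟨fun _ _ h => ⟨h.1.symm, h.2.2, h.2.1⟩⟩
  loopless := ⟨fun _ h => G.loopless.irrefl _ h.1⟩

def Cn (G : SimpleGraph V) (U : Set V) : Prop :=
  ∀ a ∈ U, ∀ b ∈ U, (rG G U).Reachable a b

theorem rG_step {G : SimpleGraph V} {U : Set V} {a b r : V} (h : G.Adj a b) (ha : a ∈ U)
    (hb : b ∈ U) (hr : (rG G U).Reachable b r) : (rG G U).Reachable a r :=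
  (SimpleGraph.Adj.reachable (show (rG G U).Adj a b from ⟨h, ha, hb⟩)).trans hr

theorem Cn_of_root {G : SimpleGraph V} {U : Set V} (r : V)
    (h : ∀ a ∈ U, (rG G U).Reachable a r) : Cn G U :=
  fun a ha b hb => (h a ha).trans (h b hb).symm

theorem crossing {G : SimpleGraph V} {U : Set V} (hU : Cn G U) (D : Set V) {a b : V}
    (ha : a ∈ U) (hb : b ∈ U) (haD : a ∈ D) (hbD : b ∉ D) :
    ∃ y ∈ U, ∃ z ∈ U, y ∈ D ∧ z ∉ D ∧ G.Adj y z := by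
  obtain ⟨p⟩ := hU a ha b hb
  obtain ⟨d, -, h1, h2⟩ := p.exists_boundary_dart D haD hbD
  exact ⟨d.fst, d.adj.2.1, d.snd, d.adj.2.2, h1, h2, d.adj.1⟩

theorem toSub {G : SimpleGraph V} {U : Set V} (hU : Cn G U) (hne : U.Nonempty) :
    ∃ T : G.Subgraph, T.Connected ∧ T.verts = U := by
  refine ⟨⟨U, fun a b => (rG G U).Adj a b, fun h => h.1, fun h => h.2.1,
    ⟨fun a b h => (rG G U).symm.symm a b h⟩⟩, ?_, rfl⟩
  rw [SimpleGraph.Subgraph.connected_iff]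
  refine ⟨?_, hne⟩
  rw [SimpleGraph.Subgraph.preconnected_iff]
  have key : ∀ (a b : V) (p : (rG G U).Walk a b) (ha : a ∈ U) (hb : b ∈ U),
      SimpleGraph.Reachable (SimpleGraph.Subgraph.coe (G := G) ⟨U, fun a b => (rG G U).Adj a b, fun h => h.1,
        fun h => h.2.1, ⟨fun a b h => (rG G U).symm.symm a b h⟩⟩) ⟨a, ha⟩ ⟨b, hb⟩ := by
    intro a b p
    induction p with
    | nil => intro ha hb; exact SimpleGraph.Reachable.refl _
    | cons h p ih =>
      intro ha hb
      refine SimpleGraph.Reachable.trans (SimpleGraph.Adj.reachable ?_) (ih h.2.2 hb)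
      exact h
  intro a b
  obtain ⟨p⟩ := hU a.1 a.2 b.1 b.2
  exact key _ _ p a.2 b.2

theorem ofSub {G : SimpleGraph V} (T : G.Subgraph) (hT : T.Connected) : Cn G T.verts := by
  intro a ha b hb
  have h : T.coe.Reachable ⟨a, ha⟩ ⟨b, hb⟩ := (SimpleGraph.Subgraph.connected_iff'.1 hT).preconnected _ _
  have := h.map (⟨fun x => x.1, fun {x y} h => ⟨h.adj_sub, x.2, y.2⟩⟩ : T.coe →g rG G T.verts)
  exact this

theorem mk_coloring {G : SimpleGraph V} {l : ℕ} {C : Type*} (κ : V → C) (K : Finset C)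
    (hK : K.card ≤ l)
    (h : ∀ S : Finset V, S.card = 3 → ∃ U : Set V, Cn G U ∧ ↑S ⊆ U ∧
      (∀ a ∈ U, a ∉ S → κ a ∈ K) ∧
      (∀ a ∈ U, a ∉ S → ∀ b ∈ U, b ∉ S → κ a = κ b → a = b)) :
    hasRvxColoring G 3 l := by
  classical
  refine ⟨fun a => if h : κ a ∈ K then (K.equivFin ⟨κ a, h⟩ : ℕ) else 0, ?_⟩
  intro S hS
  obtain ⟨U, hU, hSU, h1, h2⟩ := h S hS
  have hne : U.Nonempty := by
    have : S.Nonempty := Finset.card_pos.1 (by omega)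
    obtain ⟨x, hx⟩ := this
    exact ⟨x, hSU hx⟩
  obtain ⟨T, hT, rfl⟩ := toSub hU hne
  refine ⟨T, hT, hSU, ?_, ?_⟩
  · rintro a ⟨ha, haS⟩ b ⟨hb, hbS⟩ hab
    have haS' : a ∉ S := haS
    have hbS' : b ∉ S := hbS
    simp only [h1 a ha haS', h1 b hb hbS', dif_pos] at hab
    have := K.equivFin.injective (Fin.ext hab)
    exact h2 a ha haS' b hb hbS' (congrArg Subtype.val this)
  · rintro a ⟨ha, haS⟩
    simp only [h1 a ha haS, dif_pos]
    exact lt_of_lt_of_le (Fin.is_lt _) hK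

/-- one step up the parent map -/
def Up (X : Finset V) (f : V → V) (b a : V) : Prop := b ∉ X ∧ f b = a

/-- `a` is an ancestor of `b` -/
def An (X : Finset V) (f : V → V) : V → V → Prop := ReflTransGen (Up X f)

structure Valid (G : SimpleGraph V) (X : Finset V) (f : V → V) (ρ : V → ℕ) : Prop where
  adj : ∀ w, w ∉ X → G.Adj w (f w)
  lt : ∀ w, w ∉ X → ρ (f w) < ρ w

section anc
variable {G : SimpleGraph V} {X : Finset V} {f : V → V} {ρ : V → ℕ}

theorem An.refl (a : V) : An X f a a := ReflTransGen.refl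
theorem An.trans {a b c : V} (h : An X f a b) (h' : An X f b c) : An X f a c :=
  ReflTransGen.trans h h'
theorem An.up {a : V} (h : a ∉ X) : An X f a (f a) := ReflTransGen.single ⟨h, rfl⟩

theorem An.head {a c : V} (h : An X f a c) : a = c ∨ (a ∉ X ∧ An X f (f a) c) := by
  rcases ReflTransGen.cases_head h with h | ⟨b, ⟨h1, rfl⟩, h2⟩
  · exact Or.inl h
  · exact Or.inr ⟨h1, h2⟩

theorem An.tail {a c : V} (h : An X f a c) : a = c ∨ ∃ b, An X f a b ∧ b ∉ X ∧ f b = c := by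
  rcases ReflTransGen.cases_tail h with h | ⟨b, h1, h2, h3⟩
  · exact Or.inl h.symm
  · exact Or.inr ⟨b, h1, h2, h3⟩

theorem An.of_mem {a c : V} (h : An X f a c) (ha : a ∈ X) : a = c := by
  rcases h.head with h | h
  · exact h
  · exact absurd ha h.1

theorem An.notMem {a c : V} (h : An X f a c) (hc : c ∉ X) : a ∉ X := fun ha =>
  hc (h.of_mem ha ▸ ha)

theorem An.leaf {a c : V} (h : An X f a c) (hc : ∀ b, b ∉ X → f b ≠ c) : a = c := by
  rcases h.tail with h | ⟨b, -, h1, h2⟩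
  · exact h
  · exact absurd h2 (hc b h1)

theorem An.le (hf : Valid G X f ρ) {a c : V} (h : An X f a c) : a = c ∨ ρ c < ρ a := by
  induction h with
  | refl => exact Or.inl rfl
  | tail _ h2 ih =>
    have := hf.lt _ h2.1
    rw [h2.2] at this
    rcases ih with rfl | ih
    · exact Or.inr this
    · exact Or.inr (this.trans ih)

theorem An.antisymm (hf : Valid G X f ρ) {a c : V} (h : An X f a c) (h' : An X f c a) : a = c := by
  rcases h.le hf with h | h
  · exact h
  · rcases h'.le hf with h' | h'
    · exact h'.symm
    · omega

theorem An.total {a b c : V} (h : An X f a b) (h' : An X f a c) : An X f b c ∨ An X f c b :=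
  ReflTransGen.total_of_right_unique (fun _ _ _ h h' => h.2.symm.trans h'.2) h h'

theorem An.total' (hi : ∀ a, a ∉ X → ∀ b, b ∉ X → f a = f b → a = b)
    {a b c : V} (h : An X f b a) (h' : An X f c a) : An X f b c ∨ An X f c b := by
  have := ReflTransGen.total_of_right_unique (r := Function.swap (Up X f))
    (fun x y z h h' => hi _ h.1 _ h'.1 (h.2.trans h'.2.symm))
    (reflTransGen_swap.2 h) (reflTransGen_swap.2 h')
  rcases this with h | h
  · exact Or.inr (reflTransGen_swap.1 h)
  · exact Or.inl (reflTransGen_swap.1 h)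

theorem exists_top (hf : Valid G X f ρ) (a : V) (ha : a ∉ X) :
    ∃ t, An X f a t ∧ t ∉ X ∧ f t ∈ X := by
  induction hn : ρ a using Nat.strong_induction_on generalizing a with
  | _ n ih =>
    by_cases h : f a ∈ X
    · exact ⟨a, An.refl _, ha, h⟩
    · obtain ⟨t, h1, h2⟩ := ih (ρ (f a)) (hn ▸ hf.lt a ha) (f a) h rfl
      exact ⟨t, (An.up ha).trans h1, h2⟩

theorem An.top_of_top {a q : V} (h : An X f a q) (hq : q ∉ X) (ha : f a ∈ X) : a = q := by
  rcases h.head with h | ⟨-, h⟩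
  · exact h
  · exact absurd (h.of_mem ha ▸ ha) hq

theorem update_valid [DecidableEq V] (hf : Valid G X f ρ) {u z : V} (hu : u ∉ X) (hz : G.Adj u z)
    (h : ¬ An X f z u) : ∃ ρ' : V → ℕ, Valid G X (Function.update f u z) ρ' ∧
      ∀ y, ¬ An X f y u → ρ' y = ρ y := by
  have := fun y => Classical.dec (An X f y u)
  refine ⟨fun y => if An X f y u then ρ y + ρ z + 1 else ρ y, ⟨?_, ?_⟩, ?_⟩
  · intro w hw
    by_cases hwu : w = u
    · subst hwu; simpa using hz
    · simpa [Function.update_of_ne hwu] using hf.adj w hw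
  · intro w hw
    by_cases hwu : w = u
    · subst hwu
      simp only [Function.update_self, if_neg h, if_pos (An.refl (X := X) (f := f) w)]
      omega
    · simp only [Function.update_of_ne hwu]
      have := hf.lt w hw
      by_cases h1 : An X f (f w) u
      · rw [if_pos h1, if_pos ((An.up hw).trans h1)]; omega
      · rw [if_neg h1, if_neg]
        · exact this
        · intro h2
          rcases h2.head with h3 | h3
          · exact hwu h3
          · exact h1 h3.2
  · intro y hy
    simp [hy]

end anc

theorem exists_valid [Fintype V] (G : SimpleGraph V) (hG : G.Connected) (X : Finset V)
    (hX : X.Nonempty) : ∃ f ρ, Valid G X f ρ := by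
  classical
  obtain ⟨x, hx⟩ := hX
  have : ∀ w, ∃ y, w ∉ X → G.Adj w y ∧ G.dist y x < G.dist w x := by
    intro w
    by_cases hw : w ∈ X
    · exact ⟨w, fun h => absurd hw h⟩
    · obtain ⟨p, hp⟩ := hG.exists_walk_length_eq_dist w x
      cases p with
      | nil => exact absurd hx hw
      | cons h p =>
        refine ⟨_, fun _ => ⟨h, ?_⟩⟩
        have := SimpleGraph.dist_le p
        simp at hp
        omega
  choose f hf using this
  exact ⟨f, fun w => G.dist w x, fun w hw => (hf w hw).1, fun w hw => (hf w hw).2⟩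

structure Ext (G : SimpleGraph V) (X : Finset V) (G' : SimpleGraph (Option V)) : Prop where
  some_adj : ∀ a b, G.Adj a b → G'.Adj (some a) (some b)
  none_adj : ∀ x ∈ X, G'.Adj none (some x)

section save
variable {G : SimpleGraph V} {X : Finset V} {f : V → V} {ρ : V → ℕ}
  {G' : SimpleGraph (Option V)} {l : ℕ}

theorem climb (hE : Ext G X G') (hf : Valid G X f ρ) {U : Set (Option V)} (hU : none ∈ U)
    (s : V) (h : ∀ b, An X f s b → some b ∈ U) : (rG G' U).Reachable (some s) none := by
  induction hn : ρ s using Nat.strong_induction_on generalizing s with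
  | _ n ih =>
    by_cases hs : s ∈ X
    · exact rG_step (hE.none_adj s hs).symm (h s (An.refl s)) hU (SimpleGraph.Reachable.refl _)
    · refine rG_step (hE.some_adj _ _ (hf.adj s hs)) (h s (An.refl s)) (h _ (An.up hs)) ?_
      exact ih _ (hn ▸ hf.lt s hs) (f s) (fun b hb => h b ((An.up hs).trans hb)) rfl

/-- The standard tree. -/
def ST (X : Finset V) (f : V → V) (S : Finset (Option V)) : Set (Option V) :=
  {o | o = none ∨ ∃ a s, o = some a ∧ some s ∈ S ∧ An X f s a}

theorem ST_conn (hE : Ext G X G') (hf : Valid G X f ρ) (S : Finset (Option V)) :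
    Cn G' (ST X f S) := by
  refine Cn_of_root none ?_
  rintro o (rfl | ⟨a, s, rfl, hs, ha⟩)
  · exact SimpleGraph.Reachable.refl _
  · exact climb hE hf (Or.inl rfl) a (fun b hb => Or.inr ⟨b, s, rfl, hs, ha.trans hb⟩)

theorem ST_sub (S : Finset (Option V)) : ↑S ⊆ ST X f S := by
  rintro (_ | a) h
  · exact Or.inl rfl
  · exact Or.inr ⟨a, a, rfl, h, An.refl a⟩

theorem ST_steiner {S : Finset (Option V)} {o : Option V} (h : o ∈ ST X f S) (ho : o ∉ S) :
    o = none ∨ ∃ b s, o = some (f b) ∧ b ∉ X ∧ some s ∈ S ∧ An X f s b := by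
  rcases h with rfl | ⟨a, s, rfl, hs, ha⟩
  · exact Or.inl rfl
  · right
    rcases ha.tail with rfl | ⟨b, h1, h2, rfl⟩
    · exact absurd hs ho
    · exact ⟨b, s, rfl, h2, hs, h1⟩

variable [Fintype V] [DecidableEq V]

theorem save_count (hE : Ext G X G') (hf : Valid G X f ρ)
    (h : (Finset.image f Xᶜ).card < l) : hasRvxColoring G' 3 l := by
  refine mk_coloring (C := Option V) id (insert none ((Finset.image f Xᶜ).image some)) ?_ ?_
  · refine (Finset.card_insert_le _ _).trans ?_
    have := Finset.card_image_le (s := Finset.image f Xᶜ) (f := (some : V → Option V))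
    omega
  · intro S _
    refine ⟨ST X f S, ST_conn hE hf S, ST_sub S, ?_, fun a _ _ b _ _ h => h⟩
    intro o ho hoS
    rcases ST_steiner ho hoS with rfl | ⟨b, s, rfl, hb, -⟩
    · simp
    · simp only [id, Finset.mem_insert, Finset.mem_image, Finset.mem_compl]
      exact Or.inr ⟨_, ⟨b, hb, rfl⟩, rfl⟩

theorem inj_of_not_save (hE : Ext G X G') (hf : Valid G X f ρ) (hl : Xᶜ.card ≤ l)
    (hN : ¬ hasRvxColoring G' 3 l) : ∀ a, a ∉ X → ∀ b, b ∉ X → f a = f b → a = b := by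
  by_contra hcon
  apply hN
  apply save_count hE hf
  refine lt_of_lt_of_le (lt_of_le_of_ne Finset.card_image_le ?_) hl
  intro h
  apply hcon
  intro a ha b hb hab
  exact Finset.card_image_iff.1 h (by simpa using ha) (by simpa using hb) hab

theorem card_of_not_save (hE : Ext G X G') (hf : Valid G X f ρ) (hl : Xᶜ.card ≤ l)
    (hN : ¬ hasRvxColoring G' 3 l) : (Finset.image f Xᶜ).card = l := by
  by_contra hcon
  exact hN (save_count hE hf (lt_of_le_of_ne (Finset.card_image_le.trans hl) hcon))

theorem save_base (hE : Ext G X G') (hf : Valid G X f ρ) (hl : Xᶜ.card ≤ l)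
    {u w : V} (hu : u ∉ X) (hw : w ∉ X) (huw : u ≠ w) (hadj : G.Adj u w)
    (hul : ∀ b, b ∉ X → f b ≠ u) (hwl : ∀ b, b ∉ X → f b ≠ w) (hx : f u ∈ X) :
    hasRvxColoring G' 3 l := by
  by_contra hN
  have hi := inj_of_not_save hE hf hl hN
  have hcard := card_of_not_save hE hf hl hN
  apply hN
  obtain ⟨p, hwp, hp, hpx⟩ := exists_top hf w hw
  have hxx : f p ≠ f u := by
    intro h
    have := hi _ hp _ hu h
    subst this
    exact huw (hwp.leaf hul).symm
  -- everything properly below `f u` is `u`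
  have below : ∀ z b, b ∉ X → f b = f u → An X f z b → z = u := by
    intro z b hb h1 h2
    have := hi _ hb _ hu h1
    subst this
    exact h2.leaf hul
  -- comparable with the chain of `w`
  have onchain : ∀ z b, An X f z b → An X f w b → An X f w z := by
    intro z b h1 h2
    rcases h1.total' hi h2 with h | h
    · rw [h.leaf hwl]; exact An.refl _
    · exact h
  let κ : Option V → Option V := fun o =>
    if o = some (f u) then some (f p) else if o = some w then some p else o
  have hwfu : w ≠ f u := fun h => hw (h ▸ hx)
  have k0 : κ none = none := by simp [κ]
  have k1 : κ (some (f u)) = some (f p) := by simp [κ]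
  have k2 : κ (some w) = some p := by simp [κ, hwfu]
  have k3 : ∀ a, a ≠ f u → a ≠ w → κ (some a) = some a := by
    intro a h1 h2; simp [κ, h1, h2]
  have hmem : ∀ b, b ∉ X → f b ≠ f u → some (f b) ∈ insert none (((Finset.image f Xᶜ).erase (f u)).image some) := by
    intro b hb hbu
    simp only [Finset.mem_insert, Finset.mem_image, Finset.mem_erase, Finset.mem_compl]
    exact Or.inr ⟨f b, ⟨hbu, b, hb, rfl⟩, rfl⟩
  refine mk_coloring κ (insert none (((Finset.image f Xᶜ).erase (f u)).image some)) ?_ ?_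
  · refine (Finset.card_insert_le _ _).trans ?_
    have := Finset.card_image_le (s := (Finset.image f Xᶜ).erase (f u)) (f := (some : V → Option V))
    have h2 : f u ∈ Finset.image f Xᶜ := Finset.mem_image_of_mem _ (by simpa using hu)
    have h3 := Finset.card_erase_add_one h2
    omega
  intro S _
  by_cases hbad : some u ∈ S ∧ ∃ j, j ∉ X ∧ An X f w j ∧ some j ∈ S
  · obtain ⟨huS, hj⟩ := hbad
    -- topmost `j`
    obtain ⟨j, ⟨hjX, hwj, hjS⟩, hjmin⟩ : ∃ j, (j ∉ X ∧ An X f w j ∧ some j ∈ S) ∧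
        ∀ z, (z ∉ X ∧ An X f w z ∧ some z ∈ S) → ρ j ≤ ρ z := by
      obtain ⟨j0, h0⟩ := hj
      have := Classical.decPred fun j => j ∉ X ∧ An X f w j ∧ some j ∈ S
      obtain ⟨j, hj, hm⟩ := Finset.exists_min_image
        (Finset.univ.filter fun j => j ∉ X ∧ An X f w j ∧ some j ∈ S) ρ ⟨j0, by simpa using h0⟩
      exact ⟨j, by simpa using hj, fun z hz => hm z (by simpa using hz)⟩
    let U : Set (Option V) := {o | o = none ∨ o = some (f u) ∨ o = some u ∨
      (∃ y, o = some y ∧ An X f w y ∧ An X f y j) ∨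
      ∃ a z, o = some a ∧ some z ∈ S ∧ ¬ (z ∉ X ∧ An X f w z) ∧ An X f z a}
    have hjp : An X f j p := by
      rcases hwj.total hwp with h | h
      · exact h
      · rw [h.top_of_top hjX hpx]; exact An.refl _
    have U0 : none ∈ U := Or.inl rfl
    have U1 : some (f u) ∈ U := Or.inr (Or.inl rfl)
    have U2 : some u ∈ U := Or.inr (Or.inr (Or.inl rfl))
    have U3 : ∀ y, An X f w y → An X f y j → some y ∈ U := fun y h1 h2 =>
      Or.inr (Or.inr (Or.inr (Or.inl ⟨y, rfl, h1, h2⟩)))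
    have U4 : ∀ a z, some z ∈ S → ¬ (z ∉ X ∧ An X f w z) → An X f z a → some a ∈ U :=
      fun a z h1 h2 h3 => Or.inr (Or.inr (Or.inr (Or.inr ⟨a, z, rfl, h1, h2, h3⟩)))
    have R1 : (rG G' U).Reachable (some (f u)) none :=
      rG_step (hE.none_adj _ hx).symm U1 U0 (SimpleGraph.Reachable.refl _)
    have R2 : (rG G' U).Reachable (some u) none :=
      rG_step (hE.some_adj _ _ (hf.adj u hu)) U2 U1 R1
    have R3 : ∀ y, An X f w y → An X f y j → (rG G' U).Reachable (some y) none := by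
      intro y h1
      induction h1 with
      | refl =>
        intro h2
        exact rG_step (hE.some_adj _ _ hadj.symm) (U3 _ (An.refl _) h2) U2 R2
      | @tail b c h3 h4 ih =>
        intro h2
        obtain ⟨h4, rfl⟩ := h4
        have h5 : An X f b j := (An.up h4).trans h2
        have h3' : An X f w b := h3
        exact rG_step (hE.some_adj _ _ (hf.adj b h4)).symm (U3 _ (h3'.trans (An.up h4)) h2)
          (U3 _ h3' h5) (ih h5)
    refine ⟨U, Cn_of_root none ?_, ?_, ?_⟩
    · rintro o (rfl | rfl | rfl | ⟨y, rfl, h1, h2⟩ | ⟨a, z, rfl, h1, h2, h3⟩)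
      · exact SimpleGraph.Reachable.refl _
      · exact R1
      · exact R2
      · exact R3 y h1 h2
      · exact climb hE hf U0 a (fun b hb => U4 b z h1 h2 (h3.trans hb))
    · rintro (_ | z) hz
      · exact U0
      · by_cases hzc : z ∉ X ∧ An X f w z
        · refine U3 z hzc.2 ?_
          rcases hwj.total hzc.2 with h | h
          · rcases h.le hf with rfl | h'
            · exact An.refl _
            · have := hjmin z ⟨hzc.1, hzc.2, hz⟩
              omega
          · exact h
        · exact U4 z z hz hzc (An.refl z)
    · have cls : ∀ o ∈ U, o ∉ S → o = none ∨ o = some (f u) ∨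
          (o = some w ∧ p ≠ w) ∨
          (∃ a, o = some a ∧ a ≠ f u ∧ a ≠ w ∧ a ≠ f p ∧ a ≠ p ∧ ∃ b, b ∉ X ∧ f b = a) := by
        rintro o (rfl | rfl | rfl | ⟨y, rfl, h1, h2⟩ | ⟨a, z, rfl, h1, h2, h3⟩) hoS
        · exact Or.inl rfl
        · exact Or.inr (Or.inl rfl)
        · exact absurd huS hoS
        · right; right
          have hyj : y ≠ j := by rintro rfl; exact hoS hjS
          have hyp : y ≠ p := by
            rintro rfl
            exact hyj (h2.antisymm hf hjp)
          by_cases hyw : y = w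
          · subst hyw
            exact Or.inl ⟨rfl, fun h => hyp h.symm⟩
          · right
            have hyX : y ∉ X := h2.notMem hjX
            refine ⟨y, rfl, ?_, hyw, ?_, hyp, ?_⟩
            · rintro rfl; exact hyX hx
            · rintro rfl; exact hyX hpx
            · rcases h1.tail with h | ⟨b, -, h⟩
              · exact absurd h.symm hyw
              · exact ⟨b, h⟩
        · right
          have haz : a ≠ z := by rintro rfl; exact hoS h1
          rcases h3.tail with rfl | ⟨b, h4, h5, rfl⟩
          · exact absurd rfl haz
          by_cases hbu : f b = f u
          · exact Or.inl (by rw [hbu])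
          right; right
          have hzX : z ∉ X := h4.notMem h5
          refine ⟨f b, rfl, hbu, hwl b h5, ?_, ?_, b, h5, rfl⟩
          · intro h
            have := hi _ h5 _ hp h
            subst this
            exact h2 ⟨hzX, onchain _ _ h4 hwp⟩
          · intro h
            exact h2 ⟨hzX, onchain _ _ h3 (h ▸ hwp)⟩
      constructor
      · intro o ho hoS
        rcases cls o ho hoS with rfl | rfl | ⟨rfl, h⟩ | ⟨a, rfl, h1, h2, h3, h4, b, hb, rfl⟩
        · rw [k0]; simp
        · rw [k1]; exact hmem _ hp hxx
        · rw [k2]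
          rcases hwp.tail with h' | ⟨b, -, hb, rfl⟩
          · exact absurd h'.symm h
          · refine hmem b hb ?_
            intro h'; exact hp (h' ▸ hx)
        · rw [k3 _ h1 h2]; exact hmem b hb h1
      · have hpp : f p ≠ p := fun h => hp (h ▸ hpx)
        intro o ho hoS o' ho' hoS'
        rcases cls o ho hoS with rfl | rfl | ⟨rfl, h⟩ | ⟨a, rfl, h1, h2, h3, h4, -⟩ <;>
        rcases cls o' ho' hoS' with rfl | rfl | ⟨rfl, h'⟩ | ⟨a', rfl, h1', h2', h3', h4', -⟩ <;>
        (try simp only [k0, k1, k2]) <;> (try rw [k3 _ h1 h2]) <;> (try rw [k3 _ h1' h2']) <;>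
        (try simp only [Option.some.injEq]) <;> grind
  · refine ⟨ST X f S, ST_conn hE hf S, ST_sub S, ?_, ?_⟩
    · intro o ho hoS
      rcases ST_steiner ho hoS with rfl | ⟨b, s, rfl, hb, -⟩
      · rw [k0]; simp
      · by_cases hbu : f b = f u
        · rw [hbu, k1]; exact hmem _ hp hxx
        · rw [k3 _ hbu (hwl b hb)]; exact hmem _ hb hbu
    · have aux : ∀ b s, some s ∈ S → b ∉ X → An X f s b → f b = f u →
          ∀ b' s', some s' ∈ S → b' ∉ X → An X f s' b' → f b' = f p → False := by
        intro b s hs hb hsb h1 b' s' hs' hb' hsb' h1'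
        have := below s b hb h1 hsb
        subst this
        have := hi _ hb' _ hp h1'
        subst this
        exact hbad ⟨hs, s', hsb'.notMem hb', onchain _ _ hsb' hwp, hs'⟩
      intro o ho hoS o' ho' hoS' heq
      rcases ST_steiner ho hoS with rfl | ⟨b, s, rfl, hb, hs, hsb⟩ <;>
      rcases ST_steiner ho' hoS' with rfl | ⟨b', s', rfl, hb', hs', hsb'⟩
      · rfl
      · by_cases hbu' : f b' = f u
        · rw [hbu', k0, k1] at heq; cases heq
        · rw [k3 _ hbu' (hwl b' hb'), k0] at heq; cases heq
      · by_cases hbu : f b = f u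
        · rw [hbu, k0, k1] at heq; cases heq
        · rw [k3 _ hbu (hwl b hb), k0] at heq; cases heq
      · by_cases hbu : f b = f u <;> by_cases hbu' : f b' = f u
        · rw [hbu, hbu']
        · rw [hbu, k1, k3 _ hbu' (hwl b' hb')] at heq
          exact (aux b s hs hb hsb hbu b' s' hs' hb' hsb' (by simpa using heq.symm)).elim
        · rw [hbu', k1, k3 _ hbu (hwl b hb)] at heq
          exact (aux b' s' hs' hb' hsb' hbu' b s hs hb hsb (by simpa using heq)).elim
        · rwa [k3 _ hbu (hwl b hb), k3 _ hbu' (hwl b' hb')] at heq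

theorem save_pair (hE : Ext G X G') (hl : Xᶜ.card ≤ l) (n : ℕ) :
    ∀ (f : V → V) (ρ : V → ℕ) (u w : V), Valid G X f ρ → ρ u ≤ n → u ∉ X → w ∉ X → u ≠ w →
    G.Adj u w → (∀ b, b ∉ X → f b ≠ u) → (∀ b, b ∉ X → f b ≠ w) →
    hasRvxColoring G' 3 l := by
  induction n with
  | zero =>
    intro f ρ u w hf h0 hu
    have := hf.lt u hu
    omega
  | succ n ih =>
    intro f ρ u w hf h0 hu hw huw hadj hul hwl
    by_cases hx : f u ∈ X
    · exact save_base hE hf hl hu hw huw hadj hul hwl hx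
    by_contra hN
    have hi := inj_of_not_save hE hf hl hN
    have hwu : ¬ An X f w u := fun h => huw (h.leaf hul).symm
    obtain ⟨ρ', hf', hρ⟩ := update_valid hf hu hadj hwu
    have hlt := hf.lt u hu
    have hne : f u ≠ u := fun h => by rw [h] at hlt; omega
    have h1 : ρ' (f u) = ρ (f u) := hρ _ fun h => hne (h.leaf hul)
    refine hN (ih _ ρ' (f u) u hf' (by omega) hx hu hne (hf.adj u hu).symm ?_ ?_)
    · intro b hb h
      by_cases hbu : b = u
      · subst hbu
        rw [Function.update_self] at h
        exact hwl b hb h.symm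
      · rw [Function.update_of_ne hbu] at h
        exact hbu (hi _ hb _ hu h)
    · intro b hb h
      by_cases hbu : b = u
      · subst hbu
        rw [Function.update_self] at h
        exact huw h.symm
      · rw [Function.update_of_ne hbu] at h
        exact hul b hb h

theorem leaf_of_edge (hE : Ext G X G') (hf : Valid G X f ρ) (hl : Xᶜ.card ≤ l)
    (hN : ¬ hasRvxColoring G' 3 l) {u z : V} (hu : u ∉ X) (hadj : G.Adj u z) (hz : z ≠ f u)
    (hd : ¬ An X f z u) : ∀ b, b ∉ X → f b ≠ z := by
  intro b hb h
  obtain ⟨ρ', hf', -⟩ := update_valid hf hu hadj hd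
  have hbu : b ≠ u := by rintro rfl; exact hz h.symm
  refine hbu (inj_of_not_save hE hf' hl hN b hb u hu ?_)
  rw [Function.update_of_ne hbu, Function.update_self, h]

theorem edge_W (hE : Ext G X G') (hf : Valid G X f ρ) (hl : Xᶜ.card ≤ l)
    (hN : ¬ hasRvxColoring G' 3 l) {u z : V} (hu : u ∉ X) (hz : z ∉ X) (hadj : G.Adj u z) :
    z = f u ∨ u = f z := by
  by_contra hcon
  push Not at hcon
  have key : ∀ u z, u ∉ X → z ∉ X → G.Adj u z → z ≠ f u → u ≠ f z → ¬ An X f z u → False := by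
    intro u z hu hz hadj h1 h2 hd
    have hzl := leaf_of_edge hE hf hl hN hu hadj h1 hd
    have hd' : ¬ An X f u z := fun h => hadj.ne (h.leaf hzl)
    have hul := leaf_of_edge hE hf hl hN hz hadj.symm h2 hd'
    exact hN (save_pair hE hl _ f ρ u z hf le_rfl hu hz hadj.ne hadj hul hzl)
  by_cases hd : An X f z u
  · refine key z u hz hu hadj.symm hcon.2 hcon.1 ?_
    intro h
    exact hadj.ne (h.antisymm hf hd)
  · exact key u z hu hz hadj hcon.1 hcon.2 hd

theorem edge_X (hE : Ext G X G') (hf : Valid G X f ρ) (hl : Xᶜ.card ≤ l)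
    (hN : ¬ hasRvxColoring G' 3 l) {u x : V} (hu : u ∉ X) (hx : x ∈ X) (hadj : G.Adj u x) :
    f u ∈ X := by
  by_contra hfu
  have hi := inj_of_not_save hE hf hl hN
  have hd : ¬ An X f x u := fun h => hu (h.of_mem hx ▸ hx)
  obtain ⟨ρ', hf', -⟩ := update_valid hf hu hadj hd
  have hne : f u ≠ u := (hf.adj u hu).ne'
  have hl1 : ∀ b, b ∉ X → Function.update f u x b ≠ f u := by
    intro b hb h
    by_cases hbu : b = u
    · subst hbu
      rw [Function.update_self] at h
      exact hfu (h ▸ hx)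
    · rw [Function.update_of_ne hbu] at h
      exact hbu (hi _ hb _ hu h)
  rcases edge_W hE hf' hl hN hfu hu (hf.adj u hu).symm with h | h
  · rw [Function.update_of_ne hne] at h
    have h1 := hf.lt u hu
    have h2 := hf.lt _ hfu
    rw [← h] at h2
    omega
  · rw [Function.update_self] at h
    exact hfu (h ▸ hx)

theorem edge_XX (hE : Ext G X G') (hf : Valid G X f ρ) (hl : Xᶜ.card ≤ l)
    (hN : ¬ hasRvxColoring G' 3 l) {u u' x : V} (hu : u ∉ X) (hu' : u' ∉ X) (hx : x ∈ X)
    (hadj : G.Adj u x) (hadj' : G.Adj u' x) : u = u' := by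
  by_contra hne
  obtain ⟨ρ', hf', -⟩ := update_valid hf hu hadj (fun h => hu (h.of_mem hx ▸ hx))
  obtain ⟨ρ'', hf'', -⟩ := update_valid hf' hu' hadj' (fun h => hu' (h.of_mem hx ▸ hx))
  refine hne (inj_of_not_save hE hf'' hl hN u hu u' hu' ?_)
  rw [Function.update_self, Function.update_of_ne hne, Function.update_self]

theorem cross_up (hE : Ext G X G') (hf : Valid G X f ρ) (hl : Xᶜ.card ≤ l)
    (hN : ¬ hasRvxColoring G' 3 l) {U : Set V} (hU : Cn G U) {a x q : V} (ha : a ∈ U)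
    (hx : x ∈ U) (hxX : x ∈ X) (hq : q ∉ X) (haq : An X f a q) :
    q ∈ U ∧ (f q ∈ X → ∃ y ∈ U, y ∈ X ∧ G.Adj q y) := by
  obtain ⟨y, hy, z, hz, hyD, hzD, hyz⟩ := crossing hU {y | An X f y q} ha hx haq
    (fun h => hq (An.of_mem h hxX ▸ hxX))
  have hyD : An X f y q := hyD
  have hzD : ¬ An X f z q := hzD
  have hyX : y ∉ X := hyD.notMem hq
  have hyq : y = q := by
    by_cases hzX : z ∈ X
    · exact hyD.top_of_top hq (edge_X hE hf hl hN hyX hzX hyz)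
    · rcases edge_W hE hf hl hN hyX hzX hyz with h | h
      · rcases hyD.head with h' | ⟨-, h'⟩
        · exact h'
        · exact absurd (h ▸ h') hzD
      · exact absurd ((h ▸ An.up hzX : An X f z y).trans hyD) hzD
  subst hyq
  refine ⟨hy, fun hfq => ?_⟩
  by_cases hzX : z ∈ X
  · exact ⟨z, hz, hzX, hyz⟩
  · rcases edge_W hE hf hl hN hyX hzX hyz with h | h
    · exact absurd (h ▸ hfq) hzX
    · exact absurd (h ▸ An.up hzX : An X f z y) hzD

/-- A good partial Steiner set joining the vertices of `A` to the new vertex. -/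
def Pr (G : SimpleGraph V) (X : Finset V) (f : V → V) (c : V → ℕ) (l : ℕ) (A : Set V) : Prop :=
  ∃ U : Set V, (∀ z ∈ U, z ∈ X ∨ ∃ a ∈ A, An X f a z) ∧
    (∀ q, q ∉ X → ∀ a ∈ A, An X f a q → q ∈ U) ∧
    (∀ q, q ∉ X → ∀ a ∈ A, An X f a q → f q ∈ X → ∃ y ∈ U, y ∈ X ∧ G.Adj q y) ∧
    (∀ z ∈ U, z ∉ A → c z < l) ∧
    (∀ z ∈ U, z ∉ A → ∀ z' ∈ U, z' ∉ A → c z = c z' → z = z')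

def Col (G : SimpleGraph V) (c : V → ℕ) (l : ℕ) : Prop :=
  ∀ S : Finset V, S.card = 3 → ∃ U : Set V, Cn G U ∧ ↑S ⊆ U ∧ (∀ z ∈ U, z ∉ S → c z < l) ∧
    (∀ z ∈ U, z ∉ S → ∀ z' ∈ U, z' ∉ S → c z = c z' → z = z')


theorem Pr.mono {c : V → ℕ} {A A' : Set V} (h : Pr G X f c l A) (hA : A ⊆ A')
    (h' : ∀ a' ∈ A', a' ∈ X ∨ ∃ a ∈ A, An X f a a') : Pr G X f c l A' := by
  obtain ⟨U, h1, h2, h3, h4, h5⟩ := h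
  refine ⟨U, ?_, ?_, ?_, ?_, ?_⟩
  · intro z hz
    rcases h1 z hz with h | ⟨a, ha, h⟩
    · exact Or.inl h
    · exact Or.inr ⟨a, hA ha, h⟩
  · intro q hq a ha haq
    rcases h' a ha with h | ⟨b, hb, hba⟩
    · exact absurd (haq.of_mem h ▸ h) hq
    · exact h2 q hq b hb (hba.trans haq)
  · intro q hq a ha haq
    rcases h' a ha with h | ⟨b, hb, hba⟩
    · exact absurd (haq.of_mem h ▸ h) hq
    · exact h3 q hq b hb (hba.trans haq)
  · intro z hz hzA
    exact h4 z hz fun h => hzA (hA h)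
  · intro z hz hzA z' hz' hzA'
    exact h5 z hz (fun h => hzA (hA h)) z' hz' (fun h => hzA' (hA h))


theorem save_c (hE : Ext G X G') (hf : Valid G X f ρ) (c : V → ℕ) (hc : Col G c l)
    (H : ∀ a b, a ≠ b → Pr G X f c l {a, b}) : hasRvxColoring G' 3 l := by
  refine mk_coloring (C := ℕ) (fun o => o.elim 0 c) (Finset.range l) (by simp) ?_
  intro S hS
  by_cases hnS : none ∈ S
  · have h2 : (S.erase none).card = 2 := by rw [Finset.card_erase_of_mem hnS, hS]
    obtain ⟨o1, o2, hne, hS2⟩ := Finset.card_eq_two.1 h2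
    have hmem : ∀ o, o ∈ S ↔ o = none ∨ o = o1 ∨ o = o2 := by
      intro o
      rw [← Finset.insert_erase hnS, hS2]; simp
    have ho1 : o1 ≠ none := by
      rintro rfl
      have : none ∈ S.erase none := by rw [hS2]; simp
      simp at this
    have ho2 : o2 ≠ none := by
      rintro rfl
      have : none ∈ S.erase none := by rw [hS2]; simp
      simp at this
    obtain ⟨a, rfl⟩ := Option.ne_none_iff_exists'.1 ho1
    obtain ⟨b, rfl⟩ := Option.ne_none_iff_exists'.1 ho2
    obtain ⟨U, h1, h2, h3, h4, h5⟩ := H a b (fun h => hne (by rw [h]))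
    let U' : Set (Option V) := {o | o = none ∨ ∃ z, o = some z ∧ (z ∈ U ∨ z = a ∨ z = b)}
    have Un : none ∈ U' := Or.inl rfl
    have Us : ∀ z ∈ U, some z ∈ U' := fun z hz => Or.inr ⟨z, rfl, Or.inl hz⟩
    have RX : ∀ z ∈ X, some z ∈ U' → (rG G' U').Reachable (some z) none := fun z hz hU =>
      rG_step (hE.none_adj z hz).symm hU Un (SimpleGraph.Reachable.refl _)
    have RW : ∀ n z, ρ z = n → z ∉ X → (∃ a' ∈ ({a, b} : Set V), An X f a' z) →
        (rG G' U').Reachable (some z) none := by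
      intro n
      induction n using Nat.strong_induction_on with
      | _ n ih =>
        rintro z hn hz ⟨a', ha', haz⟩
        have hzU := Us z (h2 z hz a' ha' haz)
        by_cases hfz : f z ∈ X
        · obtain ⟨y, hy, hyX, hadj⟩ := h3 z hz a' ha' haz hfz
          exact rG_step (hE.some_adj _ _ hadj) hzU (Us y hy) (RX y hyX (Us y hy))
        · refine rG_step (hE.some_adj _ _ (hf.adj z hz)) hzU
            (Us _ (h2 _ hfz a' ha' (haz.trans (An.up hz)))) ?_
          exact ih _ (hn ▸ hf.lt z hz) (f z) rfl hfz ⟨a', ha', haz.trans (An.up hz)⟩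
    have hcase : ∀ o ∈ U', o ∉ S → ∃ z, o = some z ∧ z ∈ U ∧ z ∉ ({a, b} : Set V) := by
      rintro o (rfl | ⟨z, rfl, hz⟩) hoS
      · exact absurd hnS hoS
      · rw [hmem] at hoS
        have hab : z ∉ ({a, b} : Set V) := by
          rintro (rfl | rfl) <;> simp at hoS
        refine ⟨z, rfl, ?_, hab⟩
        rcases hz with h | rfl | rfl
        · exact h
        · exact absurd (Or.inl rfl) hab
        · exact absurd (Or.inr rfl) hab
    refine ⟨U', Cn_of_root none ?_, ?_, ?_, ?_⟩
    · rintro o (rfl | ⟨z, rfl, hz⟩)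
      · exact SimpleGraph.Reachable.refl _
      · by_cases hzX : z ∈ X
        · exact RX z hzX (Or.inr ⟨z, rfl, hz⟩)
        · refine RW _ z rfl hzX ?_
          rcases hz with h | rfl | rfl
          · rcases h1 z h with h | h
            · exact absurd h hzX
            · exact h
          · exact ⟨z, Or.inl rfl, An.refl z⟩
          · exact ⟨z, Or.inr rfl, An.refl z⟩
    · intro o ho
      rcases (hmem o).1 ho with rfl | rfl | rfl
      · exact Un
      · exact Or.inr ⟨a, rfl, Or.inr (Or.inl rfl)⟩
      · exact Or.inr ⟨b, rfl, Or.inr (Or.inr rfl)⟩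
    · intro o ho hoS
      obtain ⟨z, rfl, hz, hz'⟩ := hcase o ho hoS
      simpa using h4 z hz hz'
    · intro o ho hoS o' ho' hoS' heq
      obtain ⟨z, rfl, hz, hzn⟩ := hcase o ho hoS
      obtain ⟨z', rfl, hz', hzn'⟩ := hcase o' ho' hoS'
      rw [h5 z hz hzn z' hz' hzn' (by simpa using heq)]
  · have hmem : ∀ a, a ∈ S.eraseNone ↔ some a ∈ S := fun a => Finset.mem_eraseNone
    have hcard : S.eraseNone.card = 3 := by
      rw [← hS, ← Finset.card_map (Function.Embedding.some : V ↪ Option V), Finset.map_some_eraseNone,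
        Finset.erase_eq_of_notMem hnS]
    obtain ⟨U, hU, hSU, h1, h2⟩ := hc _ hcard
    refine ⟨some '' U, ?_, ?_, ?_, ?_⟩
    · rintro _ ⟨a, ha, rfl⟩ _ ⟨b, hb, rfl⟩
      exact (hU a ha b hb).map (⟨some, fun {x y} h => ⟨hE.some_adj _ _ h.1, ⟨x, h.2.1, rfl⟩,
        ⟨y, h.2.2, rfl⟩⟩⟩ : rG G U →g rG G' (some '' U))
    · rintro (_ | a) ha
      · exact absurd ha hnS
      · exact ⟨a, hSU ((hmem a).2 ha), rfl⟩
    · rintro _ ⟨a, ha, rfl⟩ haS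
      simpa using h1 a ha (fun h => haS ((hmem a).1 h))
    · rintro _ ⟨a, ha, rfl⟩ haS _ ⟨b, hb, rfl⟩ hbS heq
      rw [h2 a ha (fun h => haS ((hmem a).1 h)) b hb (fun h => hbS ((hmem b).1 h)) (by simpa using heq)]


theorem save_c' (hE : Ext G X G') (hf : Valid G X f ρ) (c : V → ℕ) (hc : Col G c l)
    (H1 : ∀ a, a ∉ X → Pr G X f c l {a})
    (H2 : ∀ a b, a ∉ X → b ∉ X → ¬ An X f a b → ¬ An X f b a → Pr G X f c l {a, b}) :
    hasRvxColoring G' 3 l := by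
  refine save_c hE hf c hc ?_
  intro a b _
  by_cases ha : a ∈ X
  · by_cases hb : b ∈ X
    · refine Pr.mono (A := ∅) ⟨∅, by simp, by simp, by simp, by simp, by simp⟩ (by simp) ?_
      rintro _ (rfl | rfl)
      · exact Or.inl ha
      · exact Or.inl hb
    · refine (H1 b hb).mono (by simp) ?_
      rintro _ (rfl | rfl)
      · exact Or.inl ha
      · exact Or.inr ⟨_, rfl, An.refl _⟩
  · by_cases hb : b ∈ X
    · refine (H1 a ha).mono (by simp) ?_
      rintro _ (rfl | rfl)
      · exact Or.inr ⟨_, rfl, An.refl _⟩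
      · exact Or.inl hb
    · by_cases hab : An X f a b
      · refine (H1 a ha).mono (by simp) ?_
        rintro _ (rfl | rfl)
        · exact Or.inr ⟨_, rfl, An.refl _⟩
        · exact Or.inr ⟨_, rfl, hab⟩
      · by_cases hba : An X f b a
        · refine (H1 b hb).mono (by simp) ?_
          rintro _ (rfl | rfl)
          · exact Or.inr ⟨_, rfl, hba⟩
          · exact Or.inr ⟨_, rfl, An.refl _⟩
        · exact H2 a b ha hb hab hba

theorem Pr_of (hE : Ext G X G') (hf : Valid G X f ρ) (hl : Xᶜ.card ≤ l)
    (hN : ¬ hasRvxColoring G' 3 l) {c : V → ℕ} {U : Set V} (hU : Cn G U) {A B : Set V}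
    (hA : A ⊆ U) {x : V} (hx : x ∈ U) (hxX : x ∈ X)
    (htop : ∀ a ∈ A, ∀ q, q ∉ X → An X f a q → f q ∈ X → ∃ y ∈ U, y ∈ X ∧ y ∉ B ∧ G.Adj q y)
    (hB : ∀ z ∈ B, z ∈ X ∨ ∀ a ∈ A, ¬ An X f a z)
    (h1 : ∀ z ∈ U, z ∉ A → z ∉ B → c z < l)
    (h2 : ∀ z ∈ U, z ∉ A → z ∉ B → ∀ z' ∈ U, z' ∉ A → z' ∉ B → c z = c z' → z = z') :
    Pr G X f c l A := by
  refine ⟨{z | z ∈ U ∧ z ∉ B ∧ (z ∈ X ∨ ∃ a ∈ A, An X f a z)}, fun z hz => hz.2.2, ?_, ?_, ?_, ?_⟩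
  · intro q hq a ha haq
    refine ⟨(cross_up hE hf hl hN hU (hA ha) hx hxX hq haq).1, ?_, Or.inr ⟨a, ha, haq⟩⟩
    intro hqB
    rcases hB q hqB with h | h
    · exact hq h
    · exact h a ha haq
  · intro q hq a ha haq hfq
    obtain ⟨y, hy, hyX, hyB, hadj⟩ := htop a ha q hq haq hfq
    exact ⟨y, ⟨hy, hyB, Or.inl hyX⟩, hyX, hadj⟩
  · intro z hz hzA
    exact h1 z hz.1 hzA hz.2.1
  · intro z hz hzA z' hz' hzA'
    exact h2 z hz.1 hzA hz.2.1 z' hz'.1 hzA' hz'.2.1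


theorem top_unique {a t q : V} (ht : t ∉ X) (hft : f t ∈ X)
    (hat : An X f a t) (hq : q ∉ X) (hfq : f q ∈ X) (haq : An X f a q) : q = t := by
  rcases hat.total haq with h | h
  · exact (h.top_of_top hq hft).symm
  · exact h.top_of_top ht hfq


theorem col3 {c : V → ℕ} (hc : Col G c l) {a b d : V} (h1 : a ≠ b) (h2 : a ≠ d) (h3 : b ≠ d) :
    ∃ U : Set V, Cn G U ∧ a ∈ U ∧ b ∈ U ∧ d ∈ U ∧
      (∀ z ∈ U, z ≠ a → z ≠ b → z ≠ d → c z < l) ∧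
      (∀ z ∈ U, z ≠ a → z ≠ b → z ≠ d → ∀ z' ∈ U, z' ≠ a → z' ≠ b → z' ≠ d → c z = c z' → z = z') := by
  obtain ⟨U, hU, hS, h4, h5⟩ := hc {a, b, d} (by rw [Finset.card_eq_three]; exact ⟨a, b, d, h1, h2, h3, rfl⟩)
  refine ⟨U, hU, hS (by simp), hS (by simp), hS (by simp), ?_, ?_⟩
  · intro z hz q1 q2 q3
    exact h4 z hz (by simp [q1, q2, q3])
  · intro z hz q1 q2 q3 z' hz' q1' q2' q3'
    exact h5 z hz (by simp [q1, q2, q3]) z' hz' (by simp [q1', q2', q3'])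

theorem case_three (hE : Ext G X G') (hf : Valid G X f ρ) (hl : Xᶜ.card ≤ l)
    (hN : ¬ hasRvxColoring G' 3 l) {c : V → ℕ} (hc : Col G c l)
    (hA : ∀ t, t ∉ X → f t ∈ X → ∃ x ∈ X, ∃ x' ∈ X, x ≠ x' ∧ ¬ G.Adj t x ∧ ¬ G.Adj t x')
    (hB : ∀ t t', t ∉ X → t' ∉ X → f t ∈ X → f t' ∈ X → t ≠ t' →
      ∃ x ∈ X, ¬ G.Adj t x ∧ ¬ G.Adj t' x) : False := by
  have hi := inj_of_not_save hE hf hl hN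
  refine hN (save_c' hE hf c hc ?_ ?_)
  · intro a ha
    obtain ⟨t, hat, ht, hft⟩ := exists_top hf a ha
    obtain ⟨x, hx, x', hx', hne, htx, htx'⟩ := hA t ht hft
    obtain ⟨U, hU, haU, hxU, hxU', h1, h2⟩ := col3 hc (a := a) (b := x) (d := x')
      (by rintro rfl; exact ha hx) (by rintro rfl; exact ha hx') hne
    refine Pr_of hE hf hl hN hU (A := {a}) (B := {x, x'}) (by simpa using haU) hxU hx ?_ ?_ ?_ ?_
    · rintro _ rfl q hq haq hfq
      obtain rfl := top_unique ht hft hat hq hfq haq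
      obtain ⟨y, hy, hyX, hadj⟩ := (cross_up hE hf hl hN hU haU hxU hx hq haq).2 hfq
      refine ⟨y, hy, hyX, ?_, hadj⟩
      rintro (rfl | rfl)
      · exact htx hadj
      · exact htx' hadj
    · rintro z (rfl | rfl)
      · exact Or.inl hx
      · exact Or.inl hx'
    · intro z hz hzA hzB
      simp only [Set.mem_insert_iff, Set.mem_singleton_iff, not_or] at hzA hzB
      exact h1 z hz hzA hzB.1 hzB.2
    · intro z hz hzA hzB z' hz' hzA' hzB'
      simp only [Set.mem_insert_iff, Set.mem_singleton_iff, not_or] at hzA hzB hzA' hzB'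
      exact h2 z hz hzA hzB.1 hzB.2 z' hz' hzA' hzB'.1 hzB'.2
  · intro a b ha hb hab hba
    obtain ⟨t, hat, ht, hft⟩ := exists_top hf a ha
    obtain ⟨t', hbt, ht', hft'⟩ := exists_top hf b hb
    have htt : t ≠ t' := by
      rintro rfl
      rcases hat.total' hi hbt with h | h
      · exact hab h
      · exact hba h
    obtain ⟨x, hx, htx, htx'⟩ := hB t t' ht ht' hft hft' htt
    obtain ⟨U, hU, haU, hbU, hxU, h1, h2⟩ := col3 hc (a := a) (b := b) (d := x)
      (by rintro rfl; exact hab (An.refl _)) (by rintro rfl; exact ha hx) (by rintro rfl; exact hb hx)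
    refine Pr_of hE hf hl hN hU (A := {a, b}) (B := {x}) ?_ hxU hx ?_ ?_ ?_ ?_
    · rintro _ (rfl | rfl)
      · exact haU
      · exact hbU
    · rintro _ (rfl | rfl) q hq haq hfq
      · obtain rfl := top_unique ht hft hat hq hfq haq
        obtain ⟨y, hy, hyX, hadj⟩ := (cross_up hE hf hl hN hU haU hxU hx hq haq).2 hfq
        exact ⟨y, hy, hyX, by rintro rfl; exact htx hadj, hadj⟩
      · obtain rfl := top_unique ht' hft' hbt hq hfq haq
        obtain ⟨y, hy, hyX, hadj⟩ := (cross_up hE hf hl hN hU hbU hxU hx hq haq).2 hfq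
        exact ⟨y, hy, hyX, by rintro rfl; exact htx' hadj, hadj⟩
    · rintro z rfl
      exact Or.inl hx
    · intro z hz hzA hzB
      simp only [Set.mem_insert_iff, Set.mem_singleton_iff, not_or] at hzA hzB
      exact h1 z hz hzA.1 hzA.2 hzB
    · intro z hz hzA hzB z' hz' hzA' hzB'
      simp only [Set.mem_insert_iff, Set.mem_singleton_iff, not_or] at hzA hzB hzA' hzB'
      exact h2 z hz hzA.1 hzA.2 hzB z' hz' hzA'.1 hzA'.2 hzB'


/-- `U` is a rainbow Steiner set for `S`. -/
def Fine (G' : SimpleGraph (Option V)) (κ : Option V → V) (K : Finset V) (S : Finset (Option V)) : Prop :=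
  ∃ U : Set (Option V), Cn G' U ∧ ↑S ⊆ U ∧ (∀ a ∈ U, a ∉ S → κ a ∈ K) ∧
      (∀ a ∈ U, a ∉ S → ∀ b ∈ U, b ∉ S → κ a = κ b → a = b)

theorem mem_K {b : V} (hb : b ∉ X) : f b ∈ Finset.image f Xᶜ :=
  Finset.mem_image_of_mem _ (by simpa using hb)

theorem finish (hE : Ext G X G') (hf : Valid G X f ρ) (hl : Xᶜ.card ≤ l)
    (κ : Option V → V) (h0 : κ none ∈ Finset.image f Xᶜ)
    (h1 : ∀ b, b ∉ X → κ (some (f b)) = f b)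
    (H : ∀ S : Finset (Option V), none ∉ S → ∀ p, p ∉ X → some p ∈ S →
      Fine G' κ (Finset.image f Xᶜ) S) : hasRvxColoring G' 3 l := by
  refine mk_coloring κ (Finset.image f Xᶜ) (Finset.card_image_le.trans hl) ?_
  intro S _
  by_cases hn : none ∈ S
  · have cls : ∀ o ∈ ST X f S, o ∉ S → ∃ b, b ∉ X ∧ o = some (f b) := by
      intro o ho hoS
      rcases ST_steiner ho hoS with rfl | ⟨b, s, rfl, hb, -⟩
      · exact absurd hn hoS
      · exact ⟨b, hb, rfl⟩
    refine ⟨ST X f S, ST_conn hE hf S, ST_sub S, ?_, ?_⟩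
    · intro o ho hoS
      obtain ⟨b, hb, rfl⟩ := cls o ho hoS
      rw [h1 b hb]; exact mem_K hb
    · intro o ho hoS o' ho' hoS' heq
      obtain ⟨b, hb, rfl⟩ := cls o ho hoS
      obtain ⟨b', hb', rfl⟩ := cls o' ho' hoS'
      rw [h1 b hb, h1 b' hb'] at heq
      rw [heq]
  · by_cases hp : ∃ p, p ∉ X ∧ some p ∈ S
    · obtain ⟨p, hp, hpS⟩ := hp
      exact H S hn p hp hpS
    · have hX : ∀ z, some z ∈ S → z ∈ X := by
        intro z hz
        by_contra h
        exact hp ⟨z, h, hz⟩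
      have cls : ∀ o ∈ ({o | o = none ∨ o ∈ S} : Set (Option V)), o ∉ S → o = none := by
        rintro o (h | h) hoS
        · exact h
        · exact absurd h hoS
      refine ⟨{o | o = none ∨ o ∈ S}, Cn_of_root none ?_, fun o ho => Or.inr ho, ?_, ?_⟩
      · rintro (_ | z) ho
        · exact SimpleGraph.Reachable.refl _
        · have hz : some z ∈ S := by
            rcases ho with h | h
            · cases h
            · exact h
          exact rG_step (hE.none_adj z (hX z hz)).symm ho (Or.inl rfl) (SimpleGraph.Reachable.refl _)
      · intro o ho hoS
        rw [cls o ho hoS]; exact h0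
      · intro o ho hoS o' ho' hoS' _
        rw [cls o ho hoS, cls o' ho' hoS']

def TU (X : Finset V) (f : V → V) (S : Finset (Option V)) (Y : Set V) : Set (Option V) :=
  {o | ∃ z, o = some z ∧ (some z ∈ S ∨ z ∈ Y ∨ (z ∉ X ∧ ∃ p, some p ∈ S ∧ An X f p z))}

theorem TU_conn (hE : Ext G X G') (hf : Valid G X f ρ) {S : Finset (Option V)} {Y : Set V} {t : V}
    (hR : ∀ z, some z ∈ TU X f S Y → (z ∈ X ∨ z ∈ Y ∨ f z ∈ X) →
      (rG G' (TU X f S Y)).Reachable (some z) (some t)) : Cn G' (TU X f S Y) := by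
  refine Cn_of_root (some t) ?_
  have key : ∀ n z, ρ z = n → some z ∈ TU X f S Y →
      (rG G' (TU X f S Y)).Reachable (some z) (some t) := by
    intro n
    induction n using Nat.strong_induction_on with
    | _ n ih =>
      intro z hn hz
      by_cases hc : z ∈ X ∨ z ∈ Y ∨ f z ∈ X
      · exact hR z hz hc
      · push Not at hc
        obtain ⟨hzX, hzY, hfz⟩ := hc
        have hfU : some (f z) ∈ TU X f S Y := by
          obtain ⟨z', h, h'⟩ := hz
          cases h
          rcases h' with h | h | ⟨-, p, hp, hpz⟩
          · exact ⟨f z, rfl, Or.inr (Or.inr ⟨hfz, z, h, An.up hzX⟩)⟩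
          · exact absurd h hzY
          · exact ⟨f z, rfl, Or.inr (Or.inr ⟨hfz, p, hp, hpz.trans (An.up hzX)⟩)⟩
        exact rG_step (hE.some_adj _ _ (hf.adj z hzX)) hz hfU (ih _ (hn ▸ hf.lt z hzX) _ rfl hfU)
  intro o ho
  obtain ⟨z, rfl, h⟩ := ho
  exact key _ z rfl ⟨z, rfl, h⟩

theorem TU_sub {S : Finset (Option V)} {Y : Set V} (hS : none ∉ S) : ↑S ⊆ TU X f S Y := by
  rintro (_ | z) h
  · exact absurd h hS
  · exact ⟨z, rfl, Or.inl h⟩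

theorem TU_steiner {S : Finset (Option V)} {Y : Set V} {o : Option V} (h : o ∈ TU X f S Y)
    (ho : o ∉ S) : ∃ z, o = some z ∧ (z ∈ Y ∨ (z ∉ X ∧ ∃ b, b ∉ X ∧ f b = z)) := by
  obtain ⟨z, rfl, h⟩ := h
  refine ⟨z, rfl, ?_⟩
  rcases h with h | h | ⟨h, p, hp, hpz⟩
  · exact absurd h ho
  · exact Or.inl h
  · rcases hpz.tail with rfl | ⟨b, -, hb, hbz⟩
    · exact absurd hp ho
    · exact Or.inr ⟨h, b, hb, hbz⟩

/-- Steiner set inside one branch (with at most one extra vertex `y`). -/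
theorem one_tree (hE : Ext G X G') (hf : Valid G X f ρ) (κ : Option V → V)
    (h1 : ∀ b, b ∉ X → κ (some (f b)) = f b) {t : V} (ht : t ∉ X) (hft : f t ∈ X)
    {S : Finset (Option V)} (hn : none ∉ S) {p : V} (hp : some p ∈ S) (hpt : An X f p t)
    (Y : Set V) (hY : ∀ y ∈ Y, G.Adj t y ∧ κ (some y) = f t) (hY1 : ∀ y ∈ Y, ∀ y' ∈ Y, y = y')
    (hS : ∀ z, some z ∈ S → An X f z t ∨ (z ∈ X ∧ (G.Adj t z ∨ ∃ y ∈ Y, G.Adj y z))) :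
    Fine G' κ (Finset.image f Xᶜ) S := by
  have Ut : some t ∈ TU X f S Y := ⟨t, rfl, Or.inr (Or.inr ⟨ht, p, hp, hpt⟩)⟩
  have UY : ∀ y ∈ Y, some y ∈ TU X f S Y := fun y hy => ⟨y, rfl, Or.inr (Or.inl hy)⟩
  have Rt : (rG G' (TU X f S Y)).Reachable (some t) (some t) := SimpleGraph.Reachable.refl _
  have RY : ∀ y ∈ Y, (rG G' (TU X f S Y)).Reachable (some y) (some t) := fun y hy =>
    rG_step (hE.some_adj _ _ (hY y hy).1).symm (UY y hy) Ut Rt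
  have cls : ∀ o ∈ TU X f S Y, o ∉ S → ∃ z, o = some z ∧ ((z ∈ Y ∧ κ o = f t) ∨ (z ∉ X ∧ κ o = z ∧ ∃ b, b ∉ X ∧ f b = z)) := by
    intro o ho hoS
    obtain ⟨z, rfl, h | ⟨h, b, hb, rfl⟩⟩ := TU_steiner ho hoS
    · exact ⟨z, rfl, Or.inl ⟨h, (hY z h).2⟩⟩
    · exact ⟨_, rfl, Or.inr ⟨h, h1 b hb, b, hb, rfl⟩⟩
  have htop : ∀ q z, some q ∈ S → An X f q z → z ∉ X → An X f z t ∨ z = t := by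
    intro q z hq hqz hz
    rcases hS q hq with h | ⟨h, -⟩
    · rcases h.total hqz with h | h
      · exact Or.inr (h.top_of_top hz hft).symm
      · exact Or.inl h
    · exact absurd (hqz.of_mem h ▸ h) hz
  refine ⟨TU X f S Y, TU_conn hE hf (t := t) ?_, TU_sub hn, ?_, ?_⟩
  · intro z hz hz'
    have hz2 := hz
    obtain ⟨z0, h, h'⟩ := hz2
    cases h
    by_cases hzY : z ∈ Y
    · exact RY z hzY
    by_cases hzX : z ∈ X
    · have hzS : some z ∈ S := by
        rcases h' with h | h | h
        · exact h
        · exact absurd h hzY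
        · exact absurd hzX h.1
      rcases hS z hzS with h | ⟨-, h | ⟨y, hy, h⟩⟩
      · exact absurd (h.of_mem hzX ▸ hzX) ht
      · exact rG_step (hE.some_adj _ _ h).symm hz Ut Rt
      · exact rG_step (hE.some_adj _ _ h).symm hz (UY y hy) (RY y hy)
    · have hfz : f z ∈ X := by
        rcases hz' with h | h | h
        · exact absurd h hzX
        · exact absurd h hzY
        · exact h
      have : z = t := by
        rcases h' with h | h | ⟨-, q, hq, hqz⟩
        · rcases htop z z h (An.refl z) hzX with h | h
          · exact h.top_of_top ht hfz
          · exact h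
        · exact absurd h hzY
        · rcases htop q z hq hqz hzX with h | h
          · exact h.top_of_top ht hfz
          · exact h
      subst this
      exact Rt
  · intro o ho hoS
    obtain ⟨z, rfl, ⟨-, h⟩ | ⟨-, h, b, hb, rfl⟩⟩ := cls o ho hoS
    · rw [h]; exact mem_K ht
    · rw [h]; exact mem_K hb
  · intro o ho hoS o' ho' hoS' heq
    obtain ⟨z, rfl, ⟨hz, h⟩ | ⟨hz, h, -⟩⟩ := cls o ho hoS <;>
    obtain ⟨z', rfl, ⟨hz', h'⟩ | ⟨hz', h', -⟩⟩ := cls o' ho' hoS' <;>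
    rw [h, h'] at heq
    · rw [hY1 z hz z' hz']
    · exact absurd (heq ▸ hft) hz'
    · exact absurd (heq ▸ hft) hz
    · rw [heq]

theorem two_tree (hE : Ext G X G') (hf : Valid G X f ρ) (κ : Option V → V)
    (h1 : ∀ b, b ∉ X → κ (some (f b)) = f b) {t t' : V} (ht : t ∉ X) (hft : f t ∈ X)
    (ht' : t' ∉ X) (hft' : f t' ∈ X) (hne : f t ≠ f t')
    (hcov : ∀ x ∈ X, G.Adj t x ∨ G.Adj t' x)
    (hall : ∀ w, w ∉ X → An X f w t ∨ An X f w t')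
    (hk : ∀ z ∈ X, G.Adj t z → κ (some z) = f t) (hk' : ∀ z ∈ X, G.Adj t' z → κ (some z) = f t')
    (hkt : (∀ b, b ∉ X → f b ≠ t') → κ (some t') = f t')
    (hnb : ∀ x ∈ X, G.Adj t x → ∃ y ∈ X, G.Adj t' y ∧ G.Adj x y)
    (hnb' : ∀ x ∈ X, G.Adj t' x → ∃ y ∈ X, G.Adj t y ∧ G.Adj x y)
    {S : Finset (Option V)} (hn : none ∉ S) {p : V} (hp : some p ∈ S) (hpt : An X f p t) :
    Fine G' κ (Finset.image f Xᶜ) S := by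
  by_cases hS : ∀ z, some z ∈ S → An X f z t ∨ (z ∈ X ∧ G.Adj t z)
  · refine one_tree hE hf κ h1 ht hft hn hp hpt ∅ (by simp) (by simp) ?_
    intro z hz
    rcases hS z hz with h | h
    · exact Or.inl h
    · exact Or.inr ⟨h.1, Or.inl h.2⟩
  obtain ⟨s, hs, s', hs', hts, hts', hss, hcon⟩ : ∃ s ∈ X, ∃ s' ∈ X, G.Adj t s ∧ G.Adj t' s' ∧
      G.Adj s s' ∧ (some s' ∈ S ∨ ∃ z0, some z0 ∈ S ∧ An X f z0 t') := by
    push Not at hS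
    obtain ⟨z0, hz0, h2, h3⟩ := hS
    by_cases hz : z0 ∈ X
    · have h4 : G.Adj t' z0 := (hcov z0 hz).resolve_left (h3 hz)
      obtain ⟨s, hs, hts, hss⟩ := hnb' z0 hz h4
      exact ⟨s, hs, z0, hz, hts, h4, hss.symm, Or.inl hz0⟩
    · obtain ⟨y, hy, hty, hyy⟩ := hnb (f t) hft (hf.adj t ht)
      exact ⟨f t, hft, y, hy, hf.adj t ht, hty, hyy, Or.inr ⟨z0, hz0, (hall z0 hz).resolve_left h2⟩⟩
  let Y : Set V := {y | y = s ∨ y = s' ∨ y = t'}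
  have Ut : some t ∈ TU X f S Y := ⟨t, rfl, Or.inr (Or.inr ⟨ht, p, hp, hpt⟩)⟩
  have Us : some s ∈ TU X f S Y := ⟨s, rfl, Or.inr (Or.inl (Or.inl rfl))⟩
  have Us' : some s' ∈ TU X f S Y := ⟨s', rfl, Or.inr (Or.inl (Or.inr (Or.inl rfl)))⟩
  have Ut' : some t' ∈ TU X f S Y := ⟨t', rfl, Or.inr (Or.inl (Or.inr (Or.inr rfl)))⟩
  have Rt : (rG G' (TU X f S Y)).Reachable (some t) (some t) := SimpleGraph.Reachable.refl _
  have Rs := rG_step (hE.some_adj _ _ hts).symm Us Ut Rt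
  have Rs' := rG_step (hE.some_adj _ _ hss).symm Us' Us Rs
  have Rt' := rG_step (hE.some_adj _ _ hts') Ut' Us' Rs'
  have cls : ∀ o ∈ TU X f S Y, o ∉ S → (o = some s ∧ κ o = f t) ∨ (o = some s' ∧ κ o = f t') ∨
      (o = some t' ∧ κ o = f t' ∧ some s' ∈ S) ∨
      (∃ z, o = some z ∧ z ∉ X ∧ κ o = z ∧ ∃ b, b ∉ X ∧ f b = z) := by
    intro o ho hoS
    obtain ⟨z, rfl, (rfl | rfl | rfl) | ⟨h, b, hb, rfl⟩⟩ := TU_steiner ho hoS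
    · exact Or.inl ⟨rfl, hk _ hs hts⟩
    · exact Or.inr (Or.inl ⟨rfl, hk' _ hs' hts'⟩)
    · right; right
      by_cases him : ∃ b, b ∉ X ∧ f b = z
      · obtain ⟨b, hb, rfl⟩ := him
        exact Or.inr ⟨_, rfl, ht', h1 b hb, b, hb, rfl⟩
      · have him' : ∀ b, b ∉ X → f b ≠ z := fun b hb h => him ⟨b, hb, h⟩
        refine Or.inl ⟨rfl, hkt him', ?_⟩
        rcases hcon with h | ⟨z0, hz0, h⟩
        · exact h
        · rw [h.leaf him'] at hz0
          exact absurd hz0 hoS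
    · exact Or.inr (Or.inr (Or.inr ⟨_, rfl, h, h1 b hb, b, hb, rfl⟩))
  refine ⟨TU X f S Y, TU_conn hE hf (t := t) ?_, TU_sub hn, ?_, ?_⟩
  · intro z hz hz'
    by_cases hzX : z ∈ X
    · rcases hcov z hzX with h | h
      · exact rG_step (hE.some_adj _ _ h).symm hz Ut Rt
      · exact rG_step (hE.some_adj _ _ h).symm hz Ut' Rt'
    · rcases hz' with h | (rfl | rfl | rfl) | h
      · exact absurd h hzX
      · exact Rs
      · exact Rs'
      · exact Rt'
      · rcases hall z hzX with h' | h'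
        · rw [h'.top_of_top ht h]
        · rw [h'.top_of_top ht' h]; exact Rt'
  · intro o ho hoS
    rcases cls o ho hoS with ⟨-, h⟩ | ⟨-, h⟩ | ⟨-, h, -⟩ | ⟨z, -, -, h, b, hb, rfl⟩ <;> rw [h]
    · exact mem_K ht
    · exact mem_K ht'
    · exact mem_K ht'
    · exact mem_K hb
  · intro o ho hoS o' ho' hoS' heq
    rcases cls o ho hoS with ⟨rfl, h⟩ | ⟨rfl, h⟩ | ⟨rfl, h, h2⟩ | ⟨z, rfl, hz, h, -⟩ <;>
    rcases cls o' ho' hoS' with ⟨rfl, h'⟩ | ⟨rfl, h'⟩ | ⟨rfl, h', h2'⟩ | ⟨z', rfl, hz', h', -⟩ <;>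
    first | rfl | (rw [h, h'] at heq; grind)

theorem nbr (hE : Ext G X G') (hf : Valid G X f ρ) (hl : Xᶜ.card ≤ l)
    (hN : ¬ hasRvxColoring G' 3 l) {t t' : V} (ht : t ∉ X) (hft : f t ∈ X)
    (ht' : t' ∉ X) (hft' : f t' ∈ X) (hne : t ≠ t')
    (hcov : ∀ x ∈ X, G.Adj t x ∨ G.Adj t' x) {a b x : V} {U : Set V} (hU : Cn G U)
    (haU : a ∈ U) (hbU : b ∈ U) (hxU : x ∈ U) (hat : An X f a t) (hbt : An X f b t')
    (hx : x ∈ X) (htx : G.Adj t x)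
    (hbad : ∀ y ∈ U, y ∈ X → y ≠ x → G.Adj t y → ∀ z ∈ U, z ∈ X → z ≠ x → G.Adj t' z → False) :
    ∃ y ∈ X, G.Adj t' y ∧ G.Adj x y := by
  obtain ⟨z', hz', hzX', htz'⟩ := (cross_up hE hf hl hN hU hbU hxU hx ht' hbt).2 hft'
  have hzx : z' ≠ x := by
    rintro rfl
    exact hne (edge_XX hE hf hl hN ht ht' hx htx htz')
  obtain ⟨y, hy, z, hz, hyD, hzD, hyz⟩ := crossing hU {y | An X f y t ∨ (y ∈ X ∧ G.Adj t y)}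
    haU hbU (Or.inl hat) (by
      rintro (h | h)
      · exact hne (top_unique ht' hft' hbt ht hft h)
      · exact absurd h.1 (hbt.notMem ht'))
  have hzD1 : ¬ An X f z t := fun h => hzD (Or.inl h)
  have hzD2 : z ∈ X → ¬ G.Adj t z := fun h h' => hzD (Or.inr ⟨h, h'⟩)
  rcases hyD with hyt | ⟨hyX, hty⟩
  · exfalso
    have hyX := hyt.notMem ht
    by_cases hzX : z ∈ X
    · have := hyt.top_of_top ht (edge_X hE hf hl hN hyX hzX hyz)
      subst this
      exact hzD2 hzX hyz
    · rcases edge_W hE hf hl hN hyX hzX hyz with h | h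
      · subst h
        rcases hyt.head with h' | ⟨-, h'⟩
        · subst h'; exact hzX hft
        · exact hzD1 h'
      · subst h
        exact hzD1 ((An.up hzX).trans hyt)
  · by_cases hzX : z ∈ X
    · have htz : G.Adj t' z := (hcov z hzX).resolve_left (hzD2 hzX)
      by_cases hyx : y = x
      · subst hyx
        exact ⟨z, hzX, htz, hyz⟩
      · exact (hbad y hy hyX hyx hty z' hz' hzX' hzx htz').elim
    · exfalso
      have := edge_XX hE hf hl hN ht hzX hyX hty hyz.symm
      subst this
      exact hzD1 (An.refl _)

theorem case_one (hE : Ext G X G') (hf : Valid G X f ρ) (hl : Xᶜ.card ≤ l)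
    (hN : ¬ hasRvxColoring G' 3 l) {c : V → ℕ} (hc : Col G c l)
    {t t' : V} (ht : t ∉ X) (hft : f t ∈ X)
    (ht' : t' ∉ X) (hft' : f t' ∈ X) (hne : t ≠ t')
    (hcov : ∀ x ∈ X, G.Adj t x ∨ G.Adj t' x) : False := by
  have hi := inj_of_not_save hE hf hl hN
  have hall : ∀ w, w ∉ X → An X f w t ∨ An X f w t' := by
    intro w hw
    obtain ⟨q, hwq, hq, hfq⟩ := exists_top hf w hw
    rcases hcov _ hfq with h | h
    · rw [edge_XX hE hf hl hN ht hq hfq h (hf.adj q hq)]; exact Or.inl hwq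
    · rw [edge_XX hE hf hl hN ht' hq hfq h (hf.adj q hq)]; exact Or.inr hwq
  by_cases hGood : ∀ a b, An X f a t → An X f b t' → ∃ x ∈ X, ∃ U : Set V, Cn G U ∧ a ∈ U ∧ b ∈ U ∧
      x ∈ U ∧ (∀ z ∈ U, z ≠ a → z ≠ b → z ≠ x → c z < l) ∧
      (∀ z ∈ U, z ≠ a → z ≠ b → z ≠ x → ∀ z' ∈ U, z' ≠ a → z' ≠ b → z' ≠ x → c z = c z' → z = z') ∧
      (∃ y ∈ U, y ∈ X ∧ y ≠ x ∧ G.Adj t y) ∧ (∃ y ∈ U, y ∈ X ∧ y ≠ x ∧ G.Adj t' y)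
  · have H2 : ∀ a b, An X f a t → An X f b t' → Pr G X f c l {a, b} := by
      intro a b hat hbt
      obtain ⟨x, hx, U, hU, haU, hbU, hxU, h1, h2, ⟨y, hy, hyX, hyx, hty⟩, ⟨z, hz, hzX, hzx, htz⟩⟩ :=
        hGood a b hat hbt
      refine Pr_of hE hf hl hN hU (A := {a, b}) (B := {x}) ?_ hxU hx ?_ ?_ ?_ ?_
      · rintro _ (rfl | rfl)
        · exact haU
        · exact hbU
      · rintro _ (rfl | rfl) q hq haq hfq
        · obtain rfl := top_unique ht hft hat hq hfq haq
          exact ⟨y, hy, hyX, hyx, hty⟩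
        · obtain rfl := top_unique ht' hft' hbt hq hfq haq
          exact ⟨z, hz, hzX, hzx, htz⟩
      · rintro z rfl
        exact Or.inl hx
      · intro z hz hzA hzB
        simp only [Set.mem_insert_iff, Set.mem_singleton_iff, not_or] at hzA hzB
        exact h1 z hz hzA.1 hzA.2 hzB
      · intro z hz hzA hzB z' hz' hzA' hzB'
        simp only [Set.mem_insert_iff, Set.mem_singleton_iff, not_or] at hzA hzB hzA' hzB'
        exact h2 z hz hzA.1 hzA.2 hzB z' hz' hzA'.1 hzA'.2 hzB'
    refine hN (save_c' hE hf c hc ?_ ?_)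
    · intro a ha
      rcases hall a ha with hat | hat
      · obtain ⟨x, hx, U, hU, haU, hbU, hxU, h1, h2, ⟨y, hy, hyX, hyx, hty⟩, -⟩ :=
          hGood a t' hat (An.refl _)
        refine Pr_of hE hf hl hN hU (A := {a}) (B := {x, t'}) (by simpa using haU) hxU hx ?_ ?_ ?_ ?_
        · rintro _ rfl q hq haq hfq
          obtain rfl := top_unique ht hft hat hq hfq haq
          refine ⟨y, hy, hyX, ?_, hty⟩
          rintro (h | h)
          · exact hyx h
          · exact ht' (h ▸ hyX)
        · rintro z (rfl | rfl)
          · exact Or.inl hx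
          · right
            rintro _ rfl h
            exact hne (top_unique ht hft hat ht' hft' h).symm
        · intro z hz hzA hzB
          simp only [Set.mem_insert_iff, Set.mem_singleton_iff, not_or] at hzA hzB
          exact h1 z hz hzA hzB.2 hzB.1
        · intro z hz hzA hzB z' hz' hzA' hzB'
          simp only [Set.mem_insert_iff, Set.mem_singleton_iff, not_or] at hzA hzB hzA' hzB'
          exact h2 z hz hzA hzB.2 hzB.1 z' hz' hzA' hzB'.2 hzB'.1
      · obtain ⟨x, hx, U, hU, hbU, haU, hxU, h1, h2, -, ⟨y, hy, hyX, hyx, hty⟩⟩ :=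
          hGood t a (An.refl _) hat
        refine Pr_of hE hf hl hN hU (A := {a}) (B := {x, t}) (by simpa using haU) hxU hx ?_ ?_ ?_ ?_
        · rintro _ rfl q hq haq hfq
          obtain rfl := top_unique ht' hft' hat hq hfq haq
          refine ⟨y, hy, hyX, ?_, hty⟩
          rintro (h | h)
          · exact hyx h
          · exact ht (h ▸ hyX)
        · rintro z (rfl | rfl)
          · exact Or.inl hx
          · right
            rintro _ rfl h
            exact hne (top_unique ht' hft' hat ht hft h)
        · intro z hz hzA hzB
          simp only [Set.mem_insert_iff, Set.mem_singleton_iff, not_or] at hzA hzB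
          exact h1 z hz hzB.2 hzA hzB.1
        · intro z hz hzA hzB z' hz' hzA' hzB'
          simp only [Set.mem_insert_iff, Set.mem_singleton_iff, not_or] at hzA hzB hzA' hzB'
          exact h2 z hz hzB.2 hzA hzB.1 z' hz' hzB'.2 hzA' hzB'.1
    · intro a b ha hb hab hba
      rcases hall a ha with hat | hat <;> rcases hall b hb with hbt | hbt
      · rcases hat.total' hi hbt with h | h
        · exact absurd h hab
        · exact absurd h hba
      · exact H2 a b hat hbt
      · rw [Set.pair_comm]; exact H2 b a hbt hat
      · rcases hat.total' hi hbt with h | h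
        · exact absurd h hab
        · exact absurd h hba
  · push Not at hGood
    obtain ⟨a, b, hat, hbt, hbad⟩ := hGood
    have haX := hat.notMem ht
    have hbX := hbt.notMem ht'
    have hab : a ≠ b := by
      rintro rfl
      exact hne (top_unique ht' hft' hbt ht hft hat)
    have hnb : ∀ x ∈ X, G.Adj t x → ∃ y ∈ X, G.Adj t' y ∧ G.Adj x y := by
      intro x hx htx
      obtain ⟨U, hU, haU, hbU, hxU, h1, h2⟩ := col3 hc (a := a) (b := b) (d := x) hab
        (by rintro rfl; exact haX hx) (by rintro rfl; exact hbX hx)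
      refine nbr hE hf hl hN ht hft ht' hft' hne hcov hU haU hbU hxU hat hbt hx htx ?_
      intro y hy hyX hyx hty z hz hzX hzx htz
      exact hbad x hx U hU haU hbU hxU h1 h2 ⟨y, hy, hyX, hyx, hty⟩ z hz hzX hzx htz
    have hnb' : ∀ x ∈ X, G.Adj t' x → ∃ y ∈ X, G.Adj t y ∧ G.Adj x y := by
      intro x hx htx
      obtain ⟨U, hU, haU, hbU, hxU, h1, h2⟩ := col3 hc (a := a) (b := b) (d := x) hab
        (by rintro rfl; exact haX hx) (by rintro rfl; exact hbX hx)
      refine nbr hE hf hl hN ht' hft' ht hft hne.symm (fun x hx => (hcov x hx).symm) hU hbU haU hxU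
        hbt hat hx htx ?_
      intro z hz hzX hzx htz y hy hyX hyx hty
      exact hbad x hx U hU haU hbU hxU h1 h2 ⟨y, hy, hyX, hyx, hty⟩ z hz hzX hzx htz
    classical
    let κ : Option V → V := fun o => o.elim (f t) fun z =>
      if z ∈ X then (if G.Adj t z then f t else f t')
      else if ∃ b, b ∉ X ∧ f b = z then z else if z = t then f t else f t'
    have no2 : ∀ z ∈ X, G.Adj t' z → ¬ G.Adj t z := fun z hz h' h =>
      hne (edge_XX hE hf hl hN ht ht' hz h h')
    have k1 : ∀ b, b ∉ X → κ (some (f b)) = f b := by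
      intro b hb
      by_cases hfb : f b ∈ X
      · by_cases h : G.Adj t (f b)
        · have := edge_XX hE hf hl hN ht hb hfb h (hf.adj b hb)
          subst this
          simp [κ, hfb, h]
        · have := edge_XX hE hf hl hN ht' hb hfb ((hcov _ hfb).resolve_left h) (hf.adj b hb)
          subst this
          simp [κ, hfb, h]
      · have : ∃ b', b' ∉ X ∧ f b' = f b := ⟨b, hb, rfl⟩
        simp only [κ, Option.elim, if_neg hfb, if_pos this]
    have k2 : ∀ z ∈ X, G.Adj t z → κ (some z) = f t := by
      intro z hz h
      simp [κ, hz, h]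
    have k3 : ∀ z ∈ X, G.Adj t' z → κ (some z) = f t' := by
      intro z hz h
      simp [κ, hz, no2 z hz h]
    have k4 : (∀ b, b ∉ X → f b ≠ t) → κ (some t) = f t := by
      intro h
      have : ¬ ∃ b', b' ∉ X ∧ f b' = t := fun ⟨b, hb, hb'⟩ => h b hb hb'
      simp only [κ, Option.elim, if_neg ht, if_neg this, if_true]
    have k5 : (∀ b, b ∉ X → f b ≠ t') → κ (some t') = f t' := by
      intro h
      have : ¬ ∃ b', b' ∉ X ∧ f b' = t' := fun ⟨b, hb, hb'⟩ => h b hb hb'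
      simp only [κ, Option.elim, if_neg ht', if_neg this, if_neg hne.symm]
    have hff : f t ≠ f t' := fun h => hne (hi _ ht _ ht' h)
    refine hN (finish hE hf hl κ (mem_K ht) k1 ?_)
    intro S hn p hp hpS
    rcases hall p hp with h | h
    · exact two_tree hE hf κ k1 ht hft ht' hft' hff hcov hall k2 k3 k5 hnb hnb' hn hpS h
    · exact two_tree hE hf κ k1 ht' hft' ht hft hff.symm (fun x hx => (hcov x hx).symm)
        (fun w hw => (hall w hw).symm) k3 k2 k4 hnb' hnb hn hpS h

theorem case_two (hG : G.Connected) (hE : Ext G X G') (hf : Valid G X f ρ) (hl : Xᶜ.card ≤ l)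
    (hN : ¬ hasRvxColoring G' 3 l) {c : V → ℕ} (hc : Col G c l)
    {t : V} (ht : t ∉ X) (hft : f t ∈ X)
    (hone : ∀ x ∈ X, ∀ x' ∈ X, ¬ G.Adj t x → ¬ G.Adj t x' → x = x') : False := by
  have hall : ∀ w, w ∉ X → An X f w t := by
    intro w hw
    obtain ⟨q, hwq, hq, hfq⟩ := exists_top hf w hw
    by_cases hqt : q = t
    · rwa [← hqt]
    · exfalso
      refine case_one hE hf hl hN hc ht hft hq hfq (fun h => hqt h.symm) ?_
      intro x hx
      by_cases h : G.Adj t x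
      · exact Or.inl h
      · right
        have h2 : ¬ G.Adj t (f q) := fun h' =>
          hqt (edge_XX hE hf hl hN ht hq hfq h' (hf.adj q hq)).symm
        rw [hone x hx _ hfq h h2]
        exact hf.adj q hq
  let κ : Option V → V := fun o => o.elim (f t) fun z => if z ∈ X then f t else z
  have k1 : ∀ b, b ∉ X → κ (some (f b)) = f b := by
    intro b hb
    by_cases hfb : f b ∈ X
    · have := (hall b hb).top_of_top ht hfb
      subst this
      simp [κ]
    · simp [κ, hfb]
  have k2 : ∀ z ∈ X, κ (some z) = f t := fun z hz => by simp [κ, hz]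
  refine hN (finish hE hf hl κ (mem_K ht) k1 ?_)
  intro S hn p hp hpS
  by_cases hS : ∀ z ∈ X, some z ∈ S → G.Adj t z
  · refine one_tree hE hf κ k1 ht hft hn hpS (hall p hp) ∅ (by simp) (by simp) ?_
    intro z hz
    by_cases hzX : z ∈ X
    · exact Or.inr ⟨hzX, Or.inl (hS z hzX hz)⟩
    · exact Or.inl (hall z hzX)
  · push Not at hS
    obtain ⟨z0, hz0, hzS, hnt⟩ := hS
    obtain ⟨y, hy⟩ : ∃ y, G.Adj z0 y := by
      obtain ⟨w⟩ := hG.preconnected z0 t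
      cases w with
      | nil => exact absurd hz0 ht
      | cons h _ => exact ⟨_, h⟩
    have hyX : y ∈ X := by
      by_contra hyX
      have := (hall y hyX).top_of_top ht (edge_X hE hf hl hN hyX hz0 hy.symm)
      subst this
      exact hnt hy.symm
    have hty : G.Adj t y := by
      by_contra h
      exact hy.ne (hone z0 hz0 y hyX hnt h)
    refine one_tree hE hf κ k1 ht hft hn hpS (hall p hp) {y} ?_ ?_ ?_
    · rintro _ rfl
      exact ⟨hty, k2 _ hyX⟩
    · rintro _ rfl _ rfl
      rfl
    · intro z hz
      by_cases hzX : z ∈ X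
      · refine Or.inr ⟨hzX, ?_⟩
        by_cases h : G.Adj t z
        · exact Or.inl h
        · rw [hone z hzX z0 hz0 h hnt]
          exact Or.inr ⟨y, rfl, hy.symm⟩
      · exact Or.inl (hall z hzX)

theorem main (hG : G.Connected) (hE : Ext G X G') (hX : X.Nonempty) (hl : Xᶜ.card ≤ l)
    {c : V → ℕ} (hc : Col G c l) : hasRvxColoring G' 3 l := by
  by_contra hN
  obtain ⟨f, ρ, hf⟩ := exists_valid G hG X hX
  refine case_three hE hf hl hN hc ?_ ?_
  · intro t ht hft
    by_contra hcon
    refine case_two hG hE hf hl hN hc ht hft ?_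
    intro x hx x' hx' h h'
    by_contra hne
    exact hcon ⟨x, hx, x', hx', hne, h, h'⟩
  · intro t t' ht ht' hft hft' hne
    by_contra hcon
    refine case_one hE hf hl hN hc ht hft ht' hft' hne ?_
    intro x hx
    by_contra h
    push Not at h
    exact hcon ⟨x, hx, h.1, h.2⟩

end save

end RvxAux

/-- adding a vertex `v` joined to `q ≥ n - ℓ` vertices of a connected graph `G`
of order `n` with `rvx_3(G) = ℓ` yields a graph `G'` with `rvx_3(G') ≤ ℓ`. -/
theorem rvx_three_add_vertex {V : Type*} [Fintype V] (G : SimpleGraph V)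
    (hV : 2 ≤ Fintype.card V) (hconn : G.Connected)
    (l : ℕ) (hl : rvx G 3 = l) (X : Finset V) (q : ℕ) (hX : X.card = q)
    (hq : Fintype.card V - l ≤ q)
    (G' : SimpleGraph (Option V))
    (hG' : G' = SimpleGraph.fromRel fun x y =>
      (∃ a b, x = some a ∧ y = some b ∧ G.Adj a b) ∨
        (x = none ∧ ∃ b ∈ X, y = some b)) :
    rvx G' 3 ≤ l := by
  classical
  rcases X.eq_empty_or_nonempty with hXe | hXn
  · have hempty : {m | hasRvxColoring G' 3 m} = ∅ := by
      rw [Set.eq_empty_iff_forall_notMem]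
      rintro m ⟨c, hc⟩
      obtain ⟨a, b, hab⟩ := Fintype.exists_pair_of_one_lt_card (by omega : 1 < Fintype.card V)
      obtain ⟨T, hT, hS, -⟩ := hc {none, some a, some b} (by
        rw [Finset.card_eq_three]
        exact ⟨none, some a, some b, by simp, by simp, by simpa using hab, rfl⟩)
      obtain ⟨y, -, z, -, hy, hz, hyz⟩ := RvxAux.crossing (RvxAux.ofSub T hT) {none}
        (hS (by simp : none ∈ _)) (hS (by simp : some a ∈ _)) rfl (by simp)
      rw [Set.mem_singleton_iff] at hy
      subst hy
      rw [hG', SimpleGraph.fromRel_adj] at hyz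
      subst hXe
      simp at hyz
    unfold rvx
    rw [hempty]
    simp
  · have hcol : hasRvxColoring G 3 l := by
      rw [← hl]
      refine Nat.sInf_mem (s := {m | hasRvxColoring G 3 m}) ⟨Fintype.card V, ?_⟩
      refine RvxAux.mk_coloring (C := V) id Finset.univ (by simp) ?_
      intro S _
      refine ⟨Set.univ, ?_, by simp, by simp, by simp⟩
      intro a _ b _
      exact (hconn.preconnected a b).mono (fun x y h => ⟨h, trivial, trivial⟩)
    refine Nat.sInf_le ?_
    obtain ⟨c, hc⟩ := hcol
    refine RvxAux.main (G := G) (X := X) (c := c) hconn ⟨?_, ?_⟩ hXn ?_ ?_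
    · intro a b h
      rw [hG', SimpleGraph.fromRel_adj]
      exact ⟨by simpa using h.ne, Or.inl (Or.inl ⟨a, b, rfl, rfl, h⟩)⟩
    · intro x hx
      rw [hG', SimpleGraph.fromRel_adj]
      exact ⟨by simp, Or.inl (Or.inr ⟨rfl, x, hx, rfl⟩)⟩
    · rw [Finset.card_compl]; omega
    · intro S hS
      obtain ⟨T, hT, h1, h2, h3⟩ := hc S hS
      exact ⟨T.verts, RvxAux.ofSub T hT, h1, fun z hz hzS => h3 z ⟨hz, hzS⟩,
        fun z hz hzS z' hz' hzS' h => h2 ⟨hz, hzS⟩ ⟨hz', hzS'⟩ h⟩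
end
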